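/- arXiv:1902.10512 — 7 statements merged into one kernel-verified Lean document; each statement's English description precedes it below -/
import Mathlib

section
/- Let w be an integer with γ^w = 2 in F_q (w = ind_γ 2). Then J_{2l²}(1,1) = ζ_{l²}^{−w} · J_{2l²}(1, l²). -/
open Complex Finset

/-- The `i`-th power character: `χ^i(v) = χ(v)^i` for `v ≠ 0`, with the convention
`χ^i(0) = 0` (in particular `χ^0(0) = 0`). -/
noncomputable def charPow {F : Type*} [DecidableEq F] [Zero F] (χ : F → ℂ) (i : ℤ) (v : F) : ℂ :=
  if v = 0 then 0 else χ v ^ i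

/-- The Jacobi sum `J_e(i,j) = ∑_{v ∈ F_q} χ_e^i(v) χ_e^j(v+1)`. -/
noncomputable def jSum {F : Type*} [Field F] [Fintype F] [DecidableEq F]
    (χ : F → ℂ) (i j : ℤ) : ℂ :=
  ∑ v : F, charPow χ i v * charPow χ j (v + 1)

theorem jacobiSum_one_one_eq_zeta_pow_mul {F : Type*} [Field F] [Fintype F] [DecidableEq F]
    (l p r q : ℕ) (hl : l.Prime) (hl3 : 3 ≤ l) (hp : p.Prime) (hr : 0 < r)
    (hq : q = p ^ r) (hql : q % (2 * l ^ 2) = 1) (hcard : Fintype.card F = q)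
    (γ : F) (hγ : ∀ x : F, x ≠ 0 → ∃ k : ℕ, γ ^ k = x)
    (ζ : ℂ) (hζ : ζ = Complex.exp (2 * Real.pi * Complex.I / ((2 * l ^ 2 : ℕ) : ℂ)))
    (ζl : ℂ) (hζl : ζl = ζ ^ 2)
    (χ : F → ℂ) (hχ0 : χ 0 = 0) (hχγ : χ γ = ζ)
    (hχmul : ∀ x y : F, χ (x * y) = χ x * χ y)
    (w : ℤ) (hw : γ ^ w = 2) :
    jSum χ 1 1 = ζl ^ (-w) * jSum χ 1 ((l : ℤ) ^ 2) := by
  have hl0 : (l : ℂ) ≠ 0 := by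
    have : l ≠ 0 := by omega
    exact_mod_cast this
  have hζ0 : ζ ≠ 0 := by rw [hζ]; exact Complex.exp_ne_zero _
  have hζpow : ζ ^ (l ^ 2) = -1 := by
    rw [hζ, ← Complex.exp_nat_mul, ← Complex.exp_pi_mul_I]
    congr 1
    push_cast
    field_simp
  have hγ0 : γ ≠ 0 := by
    rintro rfl
    exact hζ0 (hχγ ▸ hχ0)
  have hχ1 : χ 1 = 1 := by
    have h := hχmul γ 1
    rw [mul_one, hχγ] at h
    exact (mul_right_eq_self₀.mp h.symm).resolve_right hζ0
  let ψ : MonoidWithZeroHom F ℂ :=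
    { toFun := χ, map_zero' := hχ0, map_one' := hχ1, map_mul' := hχmul }
  have hψ : ∀ x, ψ x = χ x := fun _ => rfl
  have hχne : ∀ x, x ≠ 0 → χ x ≠ 0 := fun x hx => by
    rw [← hψ]; exact (map_ne_zero ψ).mpr hx
  have hodd : Fintype.card F % 2 = 1 := by
    rw [hcard, ← Nat.mod_mul_right_mod q 2 (l ^ 2), hql]
  have hchar : ringChar F ≠ 2 := by
    intro h
    have := FiniteField.even_card_of_char_two h
    omega
  have h2 : (2 : F) ≠ 0 := Ring.two_ne_zero hchar
  have hχ2 : χ 2 = ζ ^ w := by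
    rw [← hw, ← hψ, map_zpow₀, hψ, hχγ]
  have hηγ : quadraticChar F γ = -1 := by
    rw [quadraticChar_neg_one_iff_not_isSquare]
    intro hs
    obtain ⟨a, ha⟩ := FiniteField.exists_nonsquare hchar
    have ha0 : a ≠ 0 := by
      rintro rfl
      exact ha (IsSquare.zero)
    obtain ⟨k, rfl⟩ := hγ a ha0
    exact ha (hs.pow k)
  have hη : ∀ x : F, charPow χ ((l : ℤ) ^ 2) x = (quadraticChar F x : ℂ) := by
    intro x
    unfold charPow
    split_ifs with h
    · simp [h]
    · obtain ⟨k, rfl⟩ := hγ x h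
      rw [map_pow, hηγ, ← hψ, map_pow, hψ, hχγ]
      have : ((l : ℤ) ^ 2) = ((l ^ 2 : ℕ) : ℤ) := by push_cast; rfl
      rw [this, zpow_natCast, ← pow_mul, mul_comm, pow_mul, hζpow]
      push_cast
      rfl
  have hc1 : ∀ x : F, charPow χ 1 x = χ x := by
    intro x
    unfold charPow
    split_ifs with h
    · rw [h, hχ0]
    · simp
  have hsum0 : ∑ x : F, χ x = 0 := by
    have h1 : ζ * ∑ x : F, χ x = ∑ x : F, χ x := by
      rw [Finset.mul_sum]
      refine Fintype.sum_equiv (Equiv.mulLeft₀ γ hγ0) _ _ fun x => ?_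
      simp [hχmul, hχγ]
    have hζ1 : ζ ≠ 1 := by
      intro h
      rw [h, one_pow] at hζpow
      norm_num at hζpow
    exact (mul_left_eq_self₀.mp h1).resolve_left hζ1
  have hA : χ 2 ^ 2 * jSum χ 1 1 = ∑ u : F, χ (u ^ 2 - 1) := by
    unfold jSum
    rw [Finset.mul_sum]
    refine Fintype.sum_equiv ((Equiv.mulLeft₀ 2 h2).trans (Equiv.addRight 1)) _ _ fun x => ?_
    simp only [hc1, Equiv.trans_apply, Equiv.coe_addRight]
    have e : (Equiv.mulLeft₀ 2 h2) x = 2 * x := rfl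
    rw [e, pow_two, ← hχmul, ← hχmul, ← hχmul]
    congr 1
    ring
  have hB : ∑ u : F, χ (u ^ 2 - 1) = ∑ t : F, ((quadraticChar F t : ℂ) + 1) * χ (t - 1) := by
    rw [← Finset.sum_fiberwise' (Finset.univ : Finset F) (fun u => u ^ 2) (fun t => χ (t - 1))]
    refine Finset.sum_congr rfl fun t _ => ?_
    rw [Finset.sum_const, nsmul_eq_mul]
    congr 1
    have h := quadraticChar_card_sqrts hchar t
    have h' : ((Finset.univ.filter fun u : F => u ^ 2 = t).card : ℤ) = quadraticChar F t + 1 := by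
      rw [← h]
      congr 2
      ext; simp
    exact_mod_cast congrArg (Int.cast : ℤ → ℂ) h'
  have hC : ∑ t : F, ((quadraticChar F t : ℂ) + 1) * χ (t - 1) = jSum χ 1 ((l : ℤ) ^ 2) := by
    have : ∑ t : F, ((quadraticChar F t : ℂ) + 1) * χ (t - 1)
        = ∑ v : F, ((quadraticChar F (v + 1) : ℂ) + 1) * χ v := by
      refine Fintype.sum_equiv (Equiv.subRight 1) _ _ fun x => ?_
      simp
    rw [this]
    unfold jSum
    simp only [hη, hc1, add_mul, one_mul, Finset.sum_add_distrib, hsum0, add_zero]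
    exact Finset.sum_congr rfl fun _ _ => mul_comm _ _
  rw [← hC, ← hB, ← hA, hχ2, hζl, ← mul_assoc]
  have : (ζ ^ 2) ^ (-w) * (ζ ^ w) ^ 2 = 1 := by
    rw [zpow_neg, ← zpow_natCast, ← zpow_natCast, ← zpow_mul, ← zpow_mul, mul_comm w]
    exact inv_mul_cancel₀ (zpow_ne_zero _ hζ0)
  rw [this, one_mul]
end

section
/- Let n be an odd integer with 1 ≤ n < 2l²−1 and gcd(n, 2l²) = 1, and let τ_n be the ℚ-automorphism of ℚ(ζ_{2l²}) determined by τ_n(ζ_{2l²}) = ζ_{2l²}^n. Then q · J_{2l²}(1,n) = J_{2l²}(1, l²) · τ_n(J_{2l²}(1, l²)) · conj(J_{2l²}(1+n, l²−1)), where conj denotes complex conjugation. -/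
open Complex Finset

theorem jacobiSum_coprime_formula {F : Type*} [Field F] [Fintype F] [DecidableEq F]
    (l p r q : ℕ) (hl : l.Prime) (hl3 : 3 ≤ l) (hp : p.Prime) (hr : 0 < r)
    (hq : q = p ^ r) (hql : q % (2 * l ^ 2) = 1) (hcard : Fintype.card F = q)
    (γ : F) (hγ : ∀ x : F, x ≠ 0 → ∃ k : ℕ, γ ^ k = x)
    (ζ : ℂ) (hζ : ζ = Complex.exp (2 * Real.pi * Complex.I / ((2 * l ^ 2 : ℕ) : ℂ)))
    (ζl : ℂ) (hζl : ζl = ζ ^ 2)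
    (χ : F → ℂ) (hχ0 : χ 0 = 0) (hχγ : χ γ = ζ)
    (hχmul : ∀ x y : F, χ (x * y) = χ x * χ y)
    (n : ℤ) (hn1 : 1 ≤ n) (hn2 : n < 2 * (l : ℤ) ^ 2 - 1) (hnodd : Odd n)
    (hncop : IsCoprime n (2 * (l : ℤ) ^ 2))
    (τ : ℂ →+* ℂ) (hτ : τ ζ = ζ ^ n) :
    (q : ℂ) * jSum χ 1 n =
      jSum χ 1 ((l : ℤ) ^ 2) * τ (jSum χ 1 ((l : ℤ) ^ 2)) *
        (starRingEnd ℂ) (jSum χ (1 + n) ((l : ℤ) ^ 2 - 1)) := by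
  have hl0 : 0 < l := hl.pos
  set N : ℤ := (l : ℤ) ^ 2 with hN
  have hNpos : 0 < N := by positivity
  have hM0 : (2 * l ^ 2 : ℕ) ≠ 0 := by positivity
  have hprim : IsPrimitiveRoot ζ (2 * l ^ 2) := by
    rw [hζ]; exact Complex.isPrimitiveRoot_exp _ hM0
  have hMN : ((2 * l ^ 2 : ℕ) : ℤ) = 2 * N := by push_cast; rw [hN]
  have hζ0 : ζ ≠ 0 := hprim.ne_zero hM0
  have hζz : ∀ k : ℤ, ζ ^ k = 1 ↔ 2 * N ∣ k := by
    intro k; rw [hprim.zpow_eq_one_iff_dvd, hMN]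
  have hlodd : Odd l := hl.odd_of_ne_two (by omega)
  have hNodd : Odd N := by rw [hN]; exact (Odd.pow (by exact_mod_cast hlodd))
  have hχ1 : χ 1 = 1 := by
    have := hχmul γ 1
    rw [mul_one, hχγ] at this
    exact mul_left_cancel₀ hζ0 (by rw [← this, mul_one])
  have hγ0 : γ ≠ 0 := by rintro rfl; exact hζ0 (by rw [← hχγ, hχ0])
  have hχpow : ∀ k : ℕ, χ (γ ^ k) = ζ ^ k := by
    intro k
    induction k with
    | zero => simpa using hχ1
    | succ k ih => rw [pow_succ, hχmul, ih, hχγ, pow_succ]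
  let X : MulChar F ℂ :=
    { toFun := χ, map_one' := hχ1, map_mul' := hχmul
      map_nonunit' := by
        intro a ha
        have : a = 0 := by by_contra h; exact ha (isUnit_iff_ne_zero.2 h)
        rw [this, hχ0] }
  have hX : ∀ v, X v = χ v := fun v => rfl
  have hXz : ∀ (i : ℤ) (v : F), v ≠ 0 → (X ^ i) v = χ v ^ i := by
    intro i v hv
    rw [← hX]
    cases i with
    | ofNat k => 
      simp only [Int.ofNat_eq_natCast, zpow_natCast]
      have := MulChar.pow_apply_coe X k (Units.mk0 v hv)
      simpa using this
    | negSucc k =>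
      simp only [zpow_negSucc]
      rw [MulChar.inv_apply_eq_inv']
      have := MulChar.pow_apply_coe X (k+1) (Units.mk0 v hv)
      simp only [Units.val_mk0] at this
      rw [this]
  have hcp : ∀ (i : ℤ) (v : F), charPow χ i v = (X ^ i) v := by
    intro i v
    unfold charPow
    split_ifs with h
    · rw [h, MulChar.map_zero]
    · rw [hXz i v h]
  have hper : ∀ i j : ℤ, 2 * N ∣ i - j → X ^ i = X ^ j := by
    intro i j hij
    ext v
    rw [hXz i _ v.ne_zero, hXz j _ v.ne_zero]
    obtain ⟨k, hk⟩ := hγ v v.ne_zero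
    rw [← hk, hχpow]
    have h1 : (ζ ^ k) ^ (i - j) = 1 := by
      rw [← zpow_natCast, ← zpow_mul, hζz]; exact hij.mul_left _
    rw [zpow_sub₀ (pow_ne_zero _ hζ0)] at h1
    exact (div_eq_one_iff_eq (zpow_ne_zero _ (pow_ne_zero _ hζ0))).1 h1
  have hne : ∀ i : ℤ, ¬ 2 * N ∣ i → X ^ i ≠ 1 := by
    intro i hi h
    apply hi
    rw [← hζz, ← hχγ, ← hXz i γ hγ0, h, MulChar.one_apply (isUnit_iff_ne_zero.2 hγ0)]
  obtain ⟨s, hs⟩ : ∃ s, s = χ (-1) := ⟨_, rfl⟩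
  have hs2 : s * s = 1 := by rw [hs, ← hχmul]; simpa using hχ1
  have hs0 : s ≠ 0 := by rintro rfl; simp at hs2
  have hse : ∀ i : ℤ, Even i → s ^ i = 1 := by
    rintro i ⟨k, rfl⟩
    rw [zpow_add₀ hs0, ← mul_zpow, hs2, one_zpow]
  have hso : ∀ i : ℤ, Odd i → s ^ i = s := by
    rintro i ⟨k, rfl⟩
    rw [zpow_add₀ hs0, hse _ (even_two_mul k), one_mul, zpow_one]
  have hXs : ∀ i : ℤ, (X ^ i) (-1) = s ^ i := by
    intro i; rw [hXz i _ (by simp), hs]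
  have hJ : ∀ i j : ℤ, jSum χ i j = s ^ i * jacobiSum (X ^ i) (X ^ j) := by
    intro i j
    unfold jSum jacobiSum
    rw [← Equiv.sum_comp (Equiv.neg F), Finset.mul_sum]
    refine Finset.sum_congr rfl fun v _ => ?_
    rw [hcp, hcp, Equiv.neg_apply, ← hXs, ← mul_assoc, ← map_mul]
    congr 2 <;> ring_nf
  obtain ⟨ψ, hψ⟩ : ∃ ψ : AddChar F ℂ, ψ.IsPrimitive := by
    exact ⟨_, AddChar.FiniteField.primitiveChar_to_Complex_isPrimitive F⟩
  let g : ℤ → ℂ := fun k => gaussSum (X ^ k) ψ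
  have hg : ∀ k, g k = gaussSum (X ^ k) ψ := fun k => rfl
  have hgper : ∀ i j : ℤ, 2 * N ∣ i - j → g i = g j := by
    intro i j h; rw [hg, hg, hper i j h]
  have hA : ∀ i j : ℤ, ¬ 2 * N ∣ i + j → g (i + j) * jSum χ i j = s ^ i * g i * g j := by
    intro i j h
    have := jacobiSum_mul_nontrivial (χ := X ^ i) (φ := X ^ j)
      (by rw [← zpow_add]; exact hne _ h) ψ
    rw [← zpow_add] at this
    rw [hJ, hg, hg, hg, mul_left_comm, this, mul_assoc]
  have hC0 : ∀ k, (starRingEnd ℂ) (g k) = gaussSum (X ^ k)⁻¹ ψ⁻¹ := by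
    intro k; rw [hg, ← star_gaussSum_eq]; rfl
  have hB : ∀ k, ¬ 2 * N ∣ k → g k * (starRingEnd ℂ) (g k) = q := by
    intro k hk
    rw [hC0, hg, gaussSum_mul_gaussSum_eq_card (hne k hk) hψ, hcard]
  have hC : ∀ k, s ^ (-k) * (starRingEnd ℂ) (g k) = g (-k) := by
    intro k
    rw [hC0, hg, ← hXs, ← zpow_neg, mul_gaussSum_inv_eq_gaussSum]
  have hq0 : (q : ℂ) ≠ 0 := by
    rw [← hcard]; exact_mod_cast Fintype.card_ne_zero
  have hg0 : ∀ k, ¬ 2 * N ∣ k → g k ≠ 0 := by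
    intro k hk h
    have := hB k hk
    rw [h, zero_mul] at this
    exact hq0 this.symm
  have hτJ : ∀ i j : ℤ, τ (jSum χ i j) = jSum χ (n * i) (n * j) := by
    have hc : ∀ (i : ℤ) (v : F), τ (charPow χ i v) = charPow χ (n * i) v := by
      intro i v
      unfold charPow
      split_ifs with h
      · simp
      · obtain ⟨k, hk⟩ := hγ v h
        rw [← hk, hχpow, map_zpow₀, map_pow, hτ, zpow_mul]
        congr 1
        rw [← zpow_natCast, ← zpow_natCast, ← zpow_mul, ← zpow_mul, mul_comm]
    intro i j
    unfold jSum
    simp [map_sum, map_mul, hc]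
  have hN9 : 9 ≤ N := by rw [hN]; have : (3 : ℤ) ≤ l := by exact_mod_cast hl3
                         nlinarith
  obtain ⟨a, ha⟩ := hNodd
  obtain ⟨b, hb⟩ := hnodd
  have small : ∀ k : ℤ, 0 < k → k < 2 * N → ¬ 2 * N ∣ k := by
    intro k h1 h2 h3
    exact absurd (Int.le_of_dvd h1 h3) (by omega)
  have hnN : ¬ 2 * N ∣ N + n := by
    rintro ⟨c, hc⟩
    have hdn : N ∣ n := ⟨2 * c - 1, by linarith⟩
    have := hncop.isUnit_of_dvd' hdn (Dvd.intro_left 2 rfl)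
    rcases Int.isUnit_iff.1 this with h | h <;> omega
  have e1 := hA 1 n (small _ (by omega) (by omega))
  have e2 := hA 1 N (small _ (by omega) (by omega))
  have hdiff : 2 * N ∣ n * N - N := ⟨b, by rw [hb]; ring⟩
  have e3 := hA n (n * N) (fun h => hnN (by
    have := dvd_sub h hdiff
    rwa [show n + n * N - (n * N - N) = N + n by ring] at this))
  rw [hgper (n + n * N) (N + n) (by convert hdiff using 1; ring), hgper (n * N) N hdiff] at e3
  have e4 := hA (1 + n) (N - 1) (by rwa [show (1 + n) + (N - 1) = N + n by ring])
  rw [show (1 + n) + (N - 1) = N + n by ring, hse (1 + n) ⟨b + 1, by rw [hb]; ring⟩, one_mul] at e4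
  have e4' := congrArg (starRingEnd ℂ) e4
  rw [map_mul, map_mul] at e4'
  have e5 := hB (1 + n) (small _ (by omega) (by omega))
  have e6 := hB (N + n) hnN
  have e7 := hC (N - 1)
  rw [hse _ ⟨-a, by rw [ha]; ring⟩, one_mul, hgper (-(N - 1)) (1 + N) ⟨-1, by ring⟩] at e7
  have e8 := hB N (small _ (by omega) (by omega))
  have e9 := hC N
  rw [hso _ ⟨-a - 1, by rw [ha]; ring⟩, hgper (-N) N ⟨-1, by ring⟩] at e9
  rw [zpow_one] at e1 e2
  rw [hso n ⟨b, hb⟩] at e3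
  rw [hτJ, mul_one]
  have z1 := hg0 (1 + n) (small _ (by omega) (by omega))
  have z2 := hg0 (1 + N) (small _ (by omega) (by omega))
  have z3 := hg0 (N + n) hnN
  have z4 : (starRingEnd ℂ) (g (N + n)) ≠ 0 := by rwa [Ne, map_eq_zero]
  rw [e7] at e4'
  have e10 : g N * g N = s * q := by
    rw [← e8]; nth_rewrite 2 [← e9]; ring
  apply mul_left_cancel₀ (mul_ne_zero (mul_ne_zero z1 z2) (mul_ne_zero z3 z4))
  have L : g (1 + n) * g (1 + N) * (g (N + n) * (starRingEnd ℂ) (g (N + n))) * (q * jSum χ 1 n)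
      = q * g (1 + N) * q * (s * g 1 * g n) := by
    rw [e6, ← e1]; ring
  have R : g (1 + n) * g (1 + N) * (g (N + n) * (starRingEnd ℂ) (g (N + n))) *
      (jSum χ 1 N * jSum χ n (n * N) * (starRingEnd ℂ) (jSum χ (1 + n) (N - 1)))
      = g (1 + n) * (s * g 1 * g N) * (s * g n * g N) *
        ((starRingEnd ℂ) (g (1 + n)) * g (1 + N)) := by
    rw [← e2, ← e3, ← e4']; ring
  rw [L, R]
  calc _ = (g (1 + n) * (starRingEnd ℂ) (g (1 + n))) * (s * q) * g 1 * g n * g (1 + N) := by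
        rw [e5]; ring
    _ = (s * s) * (g (1 + n) * (starRingEnd ℂ) (g (1 + n))) * (g N * g N) * g 1 * g n * g (1 + N) := by
        rw [hs2, e10]; ring
    _ = _ := by ring
end

section
/- Let d be an odd integer with 1 ≤ d ≤ 2l−1 and d ≠ l. Then q · J_{2l²}(1, dl) = J_{2l²}(1, l²) · J_{2l²}(dl, l²) · conj(J_{2l²}(1+dl, l²−1)), where conj denotes complex conjugation. -/
open Complex Finset

lemma aux_main {F : Type*} [Field F] [Fintype F] [DecidableEq F]
    (X Y Q : MulChar F ℂ) (hQ : Q ≠ 1) (hQ2 : Q * Q = 1) (hX : X ≠ 1) (hY : Y ≠ 1)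
    (hXY : X * Y ≠ 1) (hXQ : X * Q ≠ 1) (hYQ : Y * Q ≠ 1) :
    (Fintype.card F : ℂ) * (X (-1) * jacobiSum X Y) =
      (X (-1) * jacobiSum X Q) * (Y (-1) * jacobiSum Y Q) *
        ((X * Y)⁻¹ (-1) * jacobiSum (X * Y)⁻¹ (Q * X⁻¹)⁻¹) := by
  have hq : (Fintype.card F : ℂ) ≠ 0 := by
    exact_mod_cast Fintype.card_ne_zero
  set ψ := AddChar.FiniteField.primitiveChar_to_Complex F with hψd
  have hψ : ψ.IsPrimitive := AddChar.FiniteField.primitiveChar_to_Complex_isPrimitive F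
  have hsq : ∀ A : MulChar F ℂ, A (-1) * A (-1) = 1 := fun A => by
    rw [← map_mul]; simp
  have hiv : ∀ A : MulChar F ℂ, A⁻¹ (-1) = A (-1) := fun A => by
    rw [MulChar.inv_apply']; simp
  have hrefl : ∀ A : MulChar F ℂ, A ≠ 1 →
      gaussSum A ψ * gaussSum A⁻¹ ψ = A (-1) * Fintype.card F := fun A hA => by
    rw [← gaussSum_mul_gaussSum_eq_card hA hψ, ← mul_gaussSum_inv_eq_gaussSum A⁻¹ ψ, hiv]
    ring
  have hne : ∀ A : MulChar F ℂ, A ≠ 1 → gaussSum A ψ ≠ 0 := fun A hA =>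
    gaussSum_ne_zero_of_nontrivial hq hA hψ
  have hQi : Q⁻¹ = Q := inv_eq_of_mul_eq_one_right hQ2
  have hQX : Q * X⁻¹ = (X * Q)⁻¹ := by rw [mul_inv, hQi, mul_comm]
  have hQX1 : Q * X⁻¹ ≠ 1 := by rw [hQX]; exact inv_ne_one.2 hXQ
  have hprod : (X * Y) * (Q * X⁻¹) = Y * Q := by
    calc (X * Y) * (Q * X⁻¹) = (X * X⁻¹) * (Y * Q) := by
          simp only [mul_assoc, mul_comm, mul_left_comm]
      _ = _ := by simp
  have e1 := jacobiSum_mul_nontrivial hXY ψ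
  have e2 := jacobiSum_mul_nontrivial hXQ ψ
  have e3 := jacobiSum_mul_nontrivial hYQ ψ
  have e4 := jacobiSum_mul_nontrivial (χ := X * Y) (φ := Q * X⁻¹) (by rwa [hprod]) ψ
  rw [hprod] at e4
  have e5 : jacobiSum (X * Y) (Q * X⁻¹) * jacobiSum (X * Y)⁻¹ (Q * X⁻¹)⁻¹ = Fintype.card F := by
    apply jacobiSum_mul_jacobiSum_inv _ hXY hQX1 (by rwa [hprod])
    rw [ringChar.eq_zero]
    exact (CharP.ringChar_ne_zero_of_finite F).symm
  have e6 := hrefl _ hXQ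
  rw [← hQX] at e6
  have e7 := hrefl _ hQ
  rw [hQi] at e7
  rw [hiv]
  simp only [MulChar.mul_apply] at *
  have n1 := hne _ hX
  have n2 := hne _ hY
  have n3 := hne _ hQ
  have n4 := hne _ hXY
  have n5 := hne _ hXQ
  have n6 := hne _ hYQ
  have n7 := hne _ hQX1
  have sX := hsq X
  have sY := hsq Y
  have sQ := hsq Q
  generalize gaussSum X ψ = gX at *
  generalize gaussSum Y ψ = gY at *
  generalize gaussSum Q ψ = gQ at *
  generalize gaussSum (X * Y) ψ = gXY at *
  generalize gaussSum (X * Q) ψ = gXQ at *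
  generalize gaussSum (Y * Q) ψ = gYQ at *
  generalize gaussSum (Q * X⁻¹) ψ = gQX at *
  generalize jacobiSum (X * Y)⁻¹ (Q * X⁻¹)⁻¹ = J5 at *
  generalize jacobiSum (X * Y) (Q * X⁻¹) = J4 at *
  generalize jacobiSum X Y = J1 at *
  generalize jacobiSum X Q = J2 at *
  generalize jacobiSum Y Q = J3 at *
  generalize X (-1) = x at *
  generalize Y (-1) = y at *
  generalize Q (-1) = z at *
  generalize (Fintype.card F : ℂ) = c at *
  have e8 : gXY * gQX * J5 = gYQ * c := by rw [← e4, mul_assoc, e5]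
  have key : (gXY * gQX * gXQ * gYQ) * (c * (x * J1))
      = (gXY * gQX * gXQ * gYQ) * (x * J2 * (y * J3) * (x * y * J5)) := by
    calc _ = gYQ * c * x * (gXQ * gQX) * (gXY * J1) := by ring
      _ = gYQ * c * x * (x * z * c) * (gX * gY) := by rw [e6, e1]
      _ = (x * x) * c * (z * c) * gX * gY * gYQ := by ring
      _ = (x * x) * (y * y) * x * x * c * (gQ * gQ) * gX * gY * gYQ / (x * x) := by
          rw [sX, sY, e7]; linear_combination (-(z * c * c * gX * gY * gYQ)) * sX
      _ = (x * x) * (y * y) * (gX * gQ) * (gY * gQ) * (gYQ * c) := by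
          rw [sX]; linear_combination (y * y * c * gX * gY * gYQ * gQ * gQ) * sX
      _ = (x * x) * (y * y) * (gXQ * J2) * (gYQ * J3) * (gXY * gQX * J5) := by
          rw [e2, e3, e8]
      _ = _ := by ring
  exact mul_left_cancel₀ (by simp [n4, n7, n5, n6]) key

lemma aux_conj {F : Type*} [Field F] [Fintype F] [DecidableEq F]
    (A B : MulChar F ℂ) :
    (starRingEnd ℂ) (A (-1) * jacobiSum A B) = A⁻¹ (-1) * jacobiSum A⁻¹ B⁻¹ := by
  simp only [jacobiSum, map_mul, map_sum, starRingEnd_apply, MulChar.star_apply']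

lemma aux_jSum {F : Type*} [Field F] [Fintype F] [DecidableEq F]
    (χ : F → ℂ) (X : MulChar F ℂ) (h : ∀ v, X v = χ v) (i j : ℤ) :
    jSum χ i j = (X ^ i) (-1) * jacobiSum (X ^ i) (X ^ j) := by
  have hc : ∀ (i : ℤ) (v : F), charPow χ i v = (X ^ i) v := by
    intro i v
    unfold charPow
    split_ifs with hv
    · rw [hv, MulChar.map_zero]
    · rw [← h]
      cases i with
      | ofNat n =>
        simp only [Int.ofNat_eq_natCast, zpow_natCast]
        have := MulChar.pow_apply_coe X n (Units.mk0 v hv)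
        simpa using this.symm
      | negSucc n =>
        simp only [zpow_negSucc, MulChar.inv_apply_eq_inv']
        have := MulChar.pow_apply_coe X (n+1) (Units.mk0 v hv)
        congr 1
        simpa using this.symm
  unfold jSum jacobiSum
  simp only [hc]
  rw [Finset.mul_sum, ← Equiv.sum_comp (Equiv.neg F)]
  refine Finset.sum_congr rfl fun v _ => ?_
  rw [← mul_assoc, ← map_mul]
  simp [sub_eq_add_neg, add_comm]

theorem jacobiSum_dl_formula {F : Type*} [Field F] [Fintype F] [DecidableEq F]
    (l p r q : ℕ) (hl : l.Prime) (hl3 : 3 ≤ l) (hp : p.Prime) (hr : 0 < r)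
    (hq : q = p ^ r) (hql : q % (2 * l ^ 2) = 1) (hcard : Fintype.card F = q)
    (γ : F) (hγ : ∀ x : F, x ≠ 0 → ∃ k : ℕ, γ ^ k = x)
    (ζ : ℂ) (hζ : ζ = Complex.exp (2 * Real.pi * Complex.I / ((2 * l ^ 2 : ℕ) : ℂ)))
    (ζl : ℂ) (hζl : ζl = ζ ^ 2)
    (χ : F → ℂ) (hχ0 : χ 0 = 0) (hχγ : χ γ = ζ)
    (hχmul : ∀ x y : F, χ (x * y) = χ x * χ y)
    (d : ℤ) (hd1 : 1 ≤ d) (hd2 : d ≤ 2 * (l : ℤ) - 1) (hdodd : Odd d) (hdl : d ≠ (l : ℤ)) :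
    (q : ℂ) * jSum χ 1 (d * l) =
      jSum χ 1 ((l : ℤ) ^ 2) * jSum χ (d * l) ((l : ℤ) ^ 2) *
        (starRingEnd ℂ) (jSum χ (1 + d * l) ((l : ℤ) ^ 2 - 1)) := by
  have hlp : 0 < l := hl.pos
  have hn0 : 2 * l ^ 2 ≠ 0 := by positivity
  have hprim : IsPrimitiveRoot ζ (2 * l ^ 2) := by
    rw [hζ]; exact Complex.isPrimitiveRoot_exp _ hn0
  have hζ0 : ζ ≠ 0 := hprim.ne_zero hn0
  have hγ0 : γ ≠ 0 := by
    rintro rfl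
    exact hζ0 (by rw [← hχγ, hχ0])
  have hχ1 : χ 1 = 1 := by
    have := hχmul γ 1
    rw [mul_one, hχγ] at this
    exact (mul_eq_left₀ hζ0).1 this.symm
  obtain ⟨X, hX⟩ : ∃ X : MulChar F ℂ, ∀ v, X v = χ v :=
    ⟨{ toFun := χ
       map_one' := hχ1
       map_mul' := hχmul
       map_nonunit' := fun a ha => by
        have : a = 0 := by simpa using ha
        rw [this, hχ0] }, fun _ => rfl⟩
  have hXk : ∀ k : ℕ, X (γ ^ k) = ζ ^ k := fun k => by rw [map_pow, hX, hχγ]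
  have hXn : X ^ (2 * l ^ 2) = 1 := by
    ext a
    obtain ⟨k, hk⟩ := hγ a a.ne_zero
    rw [MulChar.pow_apply_coe, ← hk, hXk, MulChar.one_apply (by rw [hk]; exact a.isUnit),
      ← pow_mul, mul_comm, pow_mul, hprim.pow_eq_one, one_pow]
  have hXz : ∀ n : ℤ, X ^ n = 1 → ((2 * l ^ 2 : ℕ) : ℤ) ∣ n := by
    intro n h
    rw [← hprim.zpow_eq_one_iff_dvd]
    have h2 : ∀ m : ℕ, (X ^ m) γ = ζ ^ m := fun m => by
      have := MulChar.pow_apply_coe X m (Units.mk0 γ hγ0)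
      simpa [hX, hχγ] using this
    have h1 : (1 : MulChar F ℂ) γ = 1 := MulChar.one_apply (Ne.isUnit hγ0)
    obtain ⟨m, rfl | rfl⟩ := n.eq_nat_or_neg
    · rw [zpow_natCast] at *
      rw [← h2, h, h1]
    · rw [zpow_neg, inv_eq_one, zpow_natCast] at *
      rw [← h2, h, h1]
  have hdvl : ∀ n : ℤ, X ^ n = 1 → (l : ℤ) ∣ n := fun n h =>
    dvd_trans ⟨2 * l, by push_cast; ring⟩ (hXz n h)
  have hdv2 : ∀ n : ℤ, X ^ n = 1 → (2 : ℤ) ∣ n := fun n h =>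
    dvd_trans ⟨(l : ℤ) ^ 2, by push_cast; ring⟩ (hXz n h)
  have hl1 : ¬ (l : ℤ) ∣ 1 := fun h => by
    have := Int.le_of_dvd one_pos h
    omega
  have hlodd : Odd (l : ℤ) := by
    exact_mod_cast hl.odd_of_ne_two (by omega)
  have hodd : ∀ n : ℤ, Odd n → X ^ n ≠ 1 := fun n hn h => by
    have := hdv2 n h
    rw [← Int.not_even_iff_odd, even_iff_two_dvd] at hn
    exact hn this
  have hX1 : X ≠ 1 := by
    have := hodd 1 odd_one
    rwa [zpow_one] at this
  have hQ2 : X ^ ((l : ℤ) ^ 2) * X ^ ((l : ℤ) ^ 2) = 1 := by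
    rw [← zpow_add, ← hXn, ← zpow_natCast]
    congr 1
    push_cast; ring
  rw [aux_jSum χ X hX, aux_jSum χ X hX, aux_jSum χ X hX, aux_jSum χ X hX, aux_conj]
  have := aux_main X (X ^ (d * l)) (X ^ ((l : ℤ) ^ 2)) (hodd _ hlodd.pow) hQ2 hX1
    (hodd _ (hdodd.mul hlodd)) ?_ ?_ ?_
  · rw [zpow_add, zpow_sub, zpow_one, ← hcard]
    exact this
  · intro h
    rw [← zpow_one_add] at h
    exact hl1 ((Int.dvd_add_left (Dvd.intro_left _ rfl)).1 (hdvl _ h))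
  · intro h
    rw [← zpow_one_add] at h
    exact hl1 ((Int.dvd_add_left (dvd_pow_self _ two_ne_zero)).1 (hdvl _ h))
  · intro h
    rw [← zpow_add] at h
    obtain ⟨c, hc⟩ := hXz _ h
    push_cast at hc
    have hl0 : (l : ℤ) ≠ 0 := by positivity
    have h3 : d + l = 2 * l * c := by
      apply mul_left_cancel₀ hl0
      linear_combination hc
    have hc1 : 0 < c := by
      by_contra hcc
      have : 2 * (l : ℤ) * c ≤ 0 := mul_nonpos_of_nonneg_of_nonpos (by positivity) (by omega)
      omega
    have hc2 : c < 2 := by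
      by_contra hcc
      have : 2 * (l : ℤ) * 2 ≤ 2 * (l : ℤ) * c :=
        mul_le_mul_of_nonneg_left (by omega) (by positivity)
      omega
    have : c = 1 := by omega
    subst this
    apply hdl
    linarith
end

section
/- Let d be an odd integer with 1 ≤ d ≤ 2l−1 and d ≠ l, and let w be an integer with γ^w = 2 in F_q (w = ind_γ 2). Then J_{2l²}(dl, l²) ≡ −ζ_{l²}^{−wdl} (mod (1−ζ_{l²})²), i.e. (J_{2l²}(dl, l²) + ζ_{l²}^{−wdl})/(1−ζ_{l²})² lies in the ring of integers of ℚ(ζ_{2l²}). -/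
open Complex Finset

theorem aux_geo (x : ℂ) (hx : IsIntegral ℤ x) (h1 : x ≠ 1) (k : ℕ) :
    IsIntegral ℤ ((x ^ k - 1) / (1 - x)) := by
  have h : (x ^ k - 1) / (1 - x) = -∑ i ∈ Finset.range k, x ^ i := by
    have h2 : (1 - x) ≠ 0 := sub_ne_zero.mpr h1.symm
    rw [div_eq_iff h2, ← geom_sum_mul]
    ring
  rw [h]
  exact (IsIntegral.sum _ fun i _ => hx.pow i).neg

/-- If `x ^ l = 1`, `x ≠ 1` then `1 - x` divides `l`. -/
theorem aux_dvd (x : ℂ) (hx : IsIntegral ℤ x) (h1 : x ≠ 1) (l : ℕ) (s : ℂ)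
    (hs : s = ∑ i ∈ Finset.range l, x ^ i) :
    IsIntegral ℤ ((s - l) / (1 - x)) := by
  have h : (s - l) / (1 - x) = ∑ i ∈ Finset.range l, (x ^ i - 1) / (1 - x) := by
    rw [← Finset.sum_div, Finset.sum_sub_distrib, hs]
    simp
  rw [h]
  exact IsIntegral.sum _ fun i _ => aux_geo x hx h1 i

theorem aux_main_s14 (x : ℂ) (hx : IsIntegral ℤ x) (l : ℕ) (h1 : x ^ l ≠ 1)
    (hl : (x ^ l) ^ l = 1) : IsIntegral ℤ ((1 - x ^ l) / (1 - x) ^ 2) := by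
  have hx1 : x ≠ 1 := by rintro rfl; simp at h1
  have n1 : 1 - x ≠ 0 := sub_ne_zero.mpr hx1.symm
  have n2 : 1 - x ^ l ≠ 0 := sub_ne_zero.mpr h1.symm
  have a := aux_dvd (x ^ l) (hx.pow l) h1 l 0 (by
    have := geom_sum_mul (x ^ l) l
    rw [hl, sub_self] at this
    rcases mul_eq_zero.mp this with h | h
    · exact h.symm
    · exact absurd (sub_eq_zero.mp h) h1)
  have b := aux_dvd x hx hx1 l _ rfl
  have c := aux_geo x hx hx1 l
  have e : (1 - x ^ l) / (1 - x) ^ 2 =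
      (∑ i ∈ Finset.range l, x ^ i - l) / (1 - x) +
        (0 - (l : ℂ)) / (1 - x ^ l) * ((x ^ l - 1) / (1 - x)) := by
    have := geom_sum_mul x l
    have h3 : (1 - x ^ l) = (∑ i ∈ Finset.range l, x ^ i) * (1 - x) := by
      linear_combination this
    have h4 : (0 - (l : ℂ)) / (1 - x ^ l) * ((x ^ l - 1) / (1 - x)) = l / (1 - x) := by
      field_simp
      ring
    rw [h4, h3]
    field_simp
    ring
  rw [e]
  exact b.add (a.mul c)

theorem aux_zpow (x : ℂ) (hx : IsIntegral ℤ x) (h1 : x ≠ 1) (l : ℕ) (hl0 : 0 < l)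
    (hl : x ^ l = 1) (n : ℤ) : IsIntegral ℤ ((x ^ n - 1) / (1 - x)) := by
  have x0 : x ≠ 0 := by
    rintro rfl
    rw [zero_pow hl0.ne'] at hl
    exact zero_ne_one hl
  have h0 : 0 ≤ n % (l : ℤ) := Int.emod_nonneg _ (by omega)
  have : x ^ n = x ^ (n % (l : ℤ)).toNat := by
    rw [← zpow_natCast x, Int.toNat_of_nonneg h0]
    conv_lhs => rw [← Int.emod_add_mul_ediv n l, zpow_add₀ x0, zpow_mul, zpow_natCast, hl]
    simp
  rw [this]
  exact aux_geo x hx h1 _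

/-- The quadratic Jacobi sum. -/
theorem aux_quad {F : Type*} [Field F] [Fintype F] [DecidableEq F] (η : F → ℂ) (γ : F)
    (hγ : γ ≠ 0) (h0 : η 0 = 0) (hm : ∀ x y, η (x * y) = η x * η y) (hs : ∀ x, x ≠ 0 → η x ^ 2 = 1)
    (h1 : η 1 = 1) (hg : η γ = -1) : ∑ v : F, η v * η (v + 1) = -1 := by
  have s0 : ∑ v : F, η v = 0 := by
    have := Fintype.sum_equiv (Equiv.mulLeft₀ γ hγ) (fun v => η (γ * v)) η (fun v => rfl)
    simp only [hm, hg, ← Finset.mul_sum] at this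
    linear_combination (-1 / 2) * this
  have e1 : ∀ v : F, η v * η (v + 1) = η (v⁻¹ + 1) - if v = 0 then 1 else 0 := by
    intro v
    by_cases hv : v = 0
    · simp [hv, h0, h1]
    · have : v + 1 = v * (v⁻¹ + 1) := by field_simp; ring
      rw [this, hm, ← mul_assoc, ← pow_two, hs v hv]
      simp [hv]
  simp only [e1, Finset.sum_sub_distrib]
  rw [Fintype.sum_equiv ((Equiv.inv F).trans (Equiv.addRight 1)) (fun v => η (v⁻¹ + 1)) η
    (fun v => by simp), s0]
  simp

theorem jacobiSum_dl_congruence {F : Type*} [Field F] [Fintype F] [DecidableEq F]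
    (l p r q : ℕ) (hl : l.Prime) (hl3 : 3 ≤ l) (hp : p.Prime) (hr : 0 < r)
    (hq : q = p ^ r) (hql : q % (2 * l ^ 2) = 1) (hcard : Fintype.card F = q)
    (γ : F) (hγ : ∀ x : F, x ≠ 0 → ∃ k : ℕ, γ ^ k = x)
    (ζ : ℂ) (hζ : ζ = Complex.exp (2 * Real.pi * Complex.I / ((2 * l ^ 2 : ℕ) : ℂ)))
    (ζl : ℂ) (hζl : ζl = ζ ^ 2)
    (χ : F → ℂ) (hχ0 : χ 0 = 0) (hχγ : χ γ = ζ)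
    (hχmul : ∀ x y : F, χ (x * y) = χ x * χ y)
    (d : ℤ) (hd1 : 1 ≤ d) (hd2 : d ≤ 2 * (l : ℤ) - 1) (hdodd : Odd d) (hdl : d ≠ (l : ℤ))
    (w : ℤ) (hw : γ ^ w = 2) :
    IsIntegral ℤ ((jSum χ (d * l) ((l : ℤ) ^ 2) + ζl ^ (-(w * d * l))) / (1 - ζl) ^ 2) := by
  have hl0 : 0 < l := by omega
  have hlC : (l : ℂ) ≠ 0 := by exact_mod_cast hl0.ne'
  have hprim : IsPrimitiveRoot ζ (2 * l ^ 2) := by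
    rw [hζ]
    exact Complex.isPrimitiveRoot_exp _ (by positivity)
  have hζ0 : ζ ≠ 0 := hprim.ne_zero (by positivity)
  have hζint : IsIntegral ℤ ζ := hprim.isIntegral (by positivity)
  have hζ2 : ζ ^ (l ^ 2) = -1 := by
    have h : (ζ ^ (l ^ 2)) ^ 2 = 1 := by rw [← pow_mul, mul_comm, hprim.pow_eq_one]
    rcases mul_self_eq_one_iff.mp ((pow_two _).symm.trans h) with h | h
    · exact absurd h (hprim.pow_ne_one_of_pos_of_lt (by positivity) (by
        have : 0 < l ^ 2 := by positivity
        omega))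
    · exact h
  have hζlint : IsIntegral ℤ ζl := hζl ▸ hζint.pow 2
  have hω1 : ζl ^ l ≠ 1 := by
    rw [hζl, ← pow_mul]
    exact hprim.pow_ne_one_of_pos_of_lt (by positivity) (by nlinarith)
  have hωl : (ζl ^ l) ^ l = 1 := by
    rw [hζl, ← pow_mul, ← pow_mul,
      show 2 * (l * l) = 2 * l ^ 2 by ring, hprim.pow_eq_one]
  have hmain := aux_main_s14 ζl hζlint l hω1 hωl
  have hz := aux_zpow (ζl ^ l) (hζlint.pow l) hω1 l hl0 hωl
  have hγ0 : γ ≠ 0 := by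
    rintro rfl
    exact hζ0 (hχγ.symm.trans hχ0)
  have hχ1 : χ 1 = 1 := by
    have := hχmul γ 1
    rw [mul_one, hχγ] at this
    exact (mul_eq_left₀ hζ0).mp this.symm
  have hχk : ∀ k : ℕ, χ (γ ^ k) = ζ ^ k := by
    intro k
    induction k with
    | zero => simpa using hχ1
    | succ k ih => rw [pow_succ, hχmul, ih, hχγ, pow_succ]
  obtain ⟨m, hm⟩ : ∃ m : ℤ, d = l + 2 * m := by
    have hlodd : Odd l := hl.odd_of_ne_two (by omega)
    have : Even (d - (l : ℤ)) := hdodd.sub_odd (by exact_mod_cast hlodd)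
    obtain ⟨m, hm⟩ := this
    exact ⟨m, by omega⟩
  have hη : ∀ v, charPow χ ((l : ℤ) ^ 2) v = χ v ^ (l ^ 2) := by
    intro v
    unfold charPow
    split_ifs with h
    · rw [h, hχ0, zero_pow (by positivity)]
    · exact_mod_cast zpow_natCast (χ v) (l ^ 2)
  have hsum : ∑ v : F, charPow χ ((l : ℤ) ^ 2) v * charPow χ ((l : ℤ) ^ 2) (v + 1) = -1 := by
    apply aux_quad _ γ hγ0
    · simp [charPow]
    · intro x y
      simp only [hη, hχmul, mul_pow]
    · intro x hx
      obtain ⟨k, rfl⟩ := hγ x hx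
      rw [hη, hχk, ← pow_mul, ← pow_mul, show k * (l ^ 2 * 2) = (2 * l ^ 2) * k by ring, pow_mul,
        hprim.pow_eq_one, one_pow]
    · rw [hη, hχ1, one_pow]
    · rw [hη, hχγ, hζ2]
  have hηint : ∀ v, IsIntegral ℤ (charPow χ ((l : ℤ) ^ 2) v) := by
    intro v
    rw [hη]
    apply IsIntegral.pow
    by_cases hv : v = 0
    · rw [hv, hχ0]; exact isIntegral_zero
    · obtain ⟨k, rfl⟩ := hγ v hv
      rw [hχk]; exact hζint.pow k
  have hfac : ∀ v, ∃ n : ℤ, charPow χ (d * l) v = charPow χ ((l : ℤ) ^ 2) v * (ζl ^ l) ^ n := by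
    intro v
    by_cases hv : v = 0
    · exact ⟨0, by simp [charPow, hv]⟩
    · obtain ⟨k, rfl⟩ := hγ v hv
      refine ⟨m * k, ?_⟩
      simp only [charPow, hv, if_false, hχk, hζl]
      simp only [← zpow_natCast, ← zpow_mul]
      rw [← zpow_add₀ hζ0, hm]
      congr 1
      push_cast
      ring
  choose n hn using hfac
  have n2 : 1 - ζl ^ l ≠ 0 := sub_ne_zero.mpr hω1.symm
  have key : (jSum χ (d * l) ((l : ℤ) ^ 2) + ζl ^ (-(w * d * l))) =
      (1 - ζl ^ l) * (∑ v : F, charPow χ ((l : ℤ) ^ 2) v * charPow χ ((l : ℤ) ^ 2) (v + 1) *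
        (((ζl ^ l) ^ n v - 1) / (1 - ζl ^ l)) +
        ((ζl ^ l) ^ (-(w * d)) - 1) / (1 - ζl ^ l)) := by
    have e1 : ζl ^ (-(w * d * l)) = (ζl ^ l) ^ (-(w * d)) := by
      rw [← zpow_natCast, ← zpow_mul]
      congr 1
      ring
    have e2 : jSum χ (d * l) ((l : ℤ) ^ 2) + 1 = ∑ v : F, (1 - ζl ^ l) *
        (charPow χ ((l : ℤ) ^ 2) v * charPow χ ((l : ℤ) ^ 2) (v + 1) *
        (((ζl ^ l) ^ n v - 1) / (1 - ζl ^ l))) := by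
      have : (1 : ℂ) = -∑ v : F, charPow χ ((l : ℤ) ^ 2) v * charPow χ ((l : ℤ) ^ 2) (v + 1) := by
        rw [hsum, neg_neg]
      conv_lhs => rw [this, ← sub_eq_add_neg]
      unfold jSum
      rw [← Finset.sum_sub_distrib]
      refine Finset.sum_congr rfl fun v _ => ?_
      rw [hn v]
      field_simp
    rw [mul_add, Finset.mul_sum, ← e2, mul_div_cancel₀ _ n2, e1]
    ring
  rw [key, mul_div_right_comm]
  exact hmain.mul ((IsIntegral.sum _ fun v _ => ((hηint v).mul (hηint (v + 1))).mul (hz _)).add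
    (hz _))
end

section
/- Let n be an integer with 1 ≤ n ≤ l²−1 and gcd(l, n) = l (i.e. l divides n). Then J_{l²}(1,n) ≡ −1 (mod (1−ζ_{l²})^{l+1}), i.e. (J_{l²}(1,n) + 1)/(1−ζ_{l²})^{l+1} lies in the ring of integers of ℚ(ζ_{l²}). -/
open Complex Finset

theorem charPow_sum_zero {F : Type*} [Field F] [Fintype F] [DecidableEq F]
    (χ : F → ℂ) (γ : F) (hγ0 : γ ≠ 0) (n : ℤ)
    (hχmul : ∀ x y : F, χ (x * y) = χ x * χ y) (hne : χ γ ^ n ≠ 1) :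
    ∑ v : F, charPow χ n v = 0 := by
  have h1 : ∑ v : F, charPow χ n (γ * v) = ∑ v : F, charPow χ n v :=
    Fintype.sum_equiv (Equiv.mulLeft₀ γ hγ0) _ _ (fun v => rfl)
  have h2 : ∑ v : F, charPow χ n (γ * v) = χ γ ^ n * ∑ v : F, charPow χ n v := by
    rw [Finset.mul_sum]
    refine Finset.sum_congr rfl fun v _ => ?_
    by_cases hv : v = 0
    · simp [charPow, hv]
    · simp [charPow, hv, hγ0, hχmul, mul_zpow]
  have h3 : (χ γ ^ n - 1) * ∑ v : F, charPow χ n v = 0 := by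
    rw [sub_mul, one_mul, ← h2, h1, sub_self]
  exact (mul_eq_zero.mp h3).resolve_left (sub_ne_zero.mpr hne)

theorem geom_int (x : ℂ) (hx : IsIntegral ℤ x) (hne : x ≠ 1) (k : ℕ) :
    IsIntegral ℤ ((1 - x ^ k) / (1 - x)) := by
  have : (1 - x ^ k) / (1 - x) = ∑ i ∈ Finset.range k, x ^ i := by
    rw [div_eq_iff (sub_ne_zero.mpr hne.symm), geom_sum_mul_neg]
  rw [this]
  exact IsIntegral.sum _ fun i _ => hx.pow i

theorem lam_int (l : ℕ) (hl : 0 < l) (ζ : ℂ) (hx : IsIntegral ℤ ζ) (hne : ζ ≠ 1)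
    (hω : IsPrimitiveRoot (ζ ^ l) l) :
    IsIntegral ℤ ((1 - ζ ^ l) / (1 - ζ) ^ l) := by
  have h := hω.pow_sub_pow_eq_prod_sub_mul (1 : ℂ) ζ hl
  have hc : (Polynomial.nthRootsFinset l (1 : ℂ)).card = l := hω.card_nthRootsFinset
  rw [one_pow] at h
  have e : (1 - ζ ^ l) / (1 - ζ) ^ l =
      ∏ μ ∈ Polynomial.nthRootsFinset l (1 : ℂ), ((1 - μ * ζ) / (1 - ζ)) := by
    rw [Finset.prod_div_distrib, ← h, Finset.prod_const, hc]
  rw [e]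
  refine IsIntegral.prod _ fun μ hμ => ?_
  have hμ1 : μ ^ l = 1 := (Polynomial.mem_nthRootsFinset hl _).mp hμ
  have : NeZero l := ⟨hl.ne'⟩
  obtain ⟨i, _, rfl⟩ := hω.eq_pow_of_pow_eq_one hμ1
  rw [← pow_mul, ← pow_succ]
  exact geom_int ζ hx hne _

theorem l_int (l : ℕ) (hl : 1 < l) (ω : ℂ) (hω : IsPrimitiveRoot ω l) :
    IsIntegral ℤ ((l : ℂ) / (1 - ω)) := by
  have e : (l : ℂ) / (1 - ω) = ∑ i ∈ Finset.range l, (1 - ω ^ i) / (1 - ω) := by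
    rw [← Finset.sum_div, Finset.sum_sub_distrib, hω.geom_sum_eq_zero hl]
    simp
  rw [e]
  exact IsIntegral.sum _ fun i _ => geom_int ω (hω.isIntegral (by omega)) (hω.ne_one hl) i

theorem jacobiSum_lsq_div {F : Type*} [Field F] [Fintype F] [DecidableEq F]
    (l p r q : ℕ) (hl : l.Prime) (hl3 : 3 ≤ l) (hp : p.Prime) (hr : 0 < r)
    (hq : q = p ^ r) (hql : q % l ^ 2 = 1) (hcard : Fintype.card F = q)
    (γ : F) (hγ : ∀ x : F, x ≠ 0 → ∃ k : ℕ, γ ^ k = x)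
    (ζ : ℂ) (hζ : ζ = Complex.exp (2 * Real.pi * Complex.I / ((l ^ 2 : ℕ) : ℂ)))
    (χ : F → ℂ) (hχ0 : χ 0 = 0) (hχγ : χ γ = ζ)
    (hχmul : ∀ x y : F, χ (x * y) = χ x * χ y)
    (n : ℤ) (hn1 : 1 ≤ n) (hn2 : n ≤ (l : ℤ) ^ 2 - 1) (hln : (l : ℤ) ∣ n) :
    IsIntegral ℤ ((jSum χ 1 n + 1) / (1 - ζ) ^ (l + 1)) := by
  have hl0 : 0 < l := hl.pos
  have hll : 1 < l ^ 2 := by nlinarith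
  have hζp : IsPrimitiveRoot ζ (l ^ 2) := by
    rw [hζ]; exact Complex.isPrimitiveRoot_exp _ (by positivity)
  have hωp : IsPrimitiveRoot (ζ ^ l) l := hζp.pow (by positivity) (by ring)
  have hζi : IsIntegral ℤ ζ := hζp.isIntegral (by positivity)
  have hωi : IsIntegral ℤ (ζ ^ l) := hζi.pow l
  have hζ1 : ζ ≠ 1 := hζp.ne_one hll
  have hω1 : ζ ^ l ≠ 1 := hωp.ne_one (by omega)
  have hζ0 : ζ ≠ 0 := hζp.ne_zero (by positivity)
  have hγ0 : γ ≠ 0 := by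
    rintro rfl; exact hζ0 (by rw [← hχγ, hχ0])
  have hχ1 : χ 1 = 1 := by
    have := hχmul γ 1
    rw [mul_one, hχγ] at this
    exact (mul_eq_left₀ hζ0).mp this.symm
  have hχpow : ∀ k : ℕ, χ (γ ^ k) = ζ ^ k := by
    intro k
    induction k with
    | zero => simp [hχ1]
    | succ k ih => rw [pow_succ, hχmul, ih, hχγ, pow_succ]
  have hχv : ∀ v : F, v ≠ 0 → ∃ k : ℕ, χ v = ζ ^ k := by
    intro v hv
    obtain ⟨k, rfl⟩ := hγ v hv
    exact ⟨k, hχpow k⟩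
  have hodd : Odd l := hl.odd_of_ne_two (by omega)
  have hχm : χ (-1) = 1 := by
    have h2 : χ (-1) * χ (-1) = 1 := by rw [← hχmul]; simp [hχ1]
    obtain ⟨k, hk⟩ := hχv (-1) (by simp)
    rcases mul_self_eq_one_iff.mp h2 with h | h
    · exact h
    · exfalso
      have h3 : χ (-1) ^ (l ^ 2) = 1 := by
        rw [hk, ← pow_mul, mul_comm, pow_mul, hζp.pow_eq_one, one_pow]
      rw [h, hodd.pow.neg_one_pow] at h3
      norm_num at h3
  obtain ⟨N, rfl⟩ := Int.eq_ofNat_of_zero_le (by omega : 0 ≤ n)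
  obtain ⟨m, rfl⟩ : l ∣ N := by exact_mod_cast hln
  have hsa : ∑ v : F, charPow χ 1 v = 0 :=
    charPow_sum_zero χ γ hγ0 1 hχmul (by rw [hχγ, zpow_one]; exact hζ1)
  have hsb : ∑ v : F, charPow χ ((l * m : ℕ) : ℤ) (v + 1) = 0 := by
    rw [← charPow_sum_zero χ γ hγ0 ((l * m : ℕ) : ℤ) hχmul ?_]
    · exact Fintype.sum_equiv (Equiv.addRight (1 : F)) _ _ (fun v => rfl)
    · rw [hχγ, zpow_natCast]
      refine hζp.pow_ne_one_of_pos_of_lt (by omega) ?_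
      zify; push_cast at hn2 ⊢; linarith
  have key : jSum χ 1 ((l * m : ℕ) : ℤ) + 1 =
      ∑ v : F, (1 - charPow χ 1 v) * (1 - charPow χ ((l * m : ℕ) : ℤ) (v + 1)) - ((q : ℂ) - 1) := by
    have : ∀ v : F, (1 - charPow χ 1 v) * (1 - charPow χ ((l * m : ℕ) : ℤ) (v + 1)) =
      1 - charPow χ 1 v - charPow χ ((l * m : ℕ) : ℤ) (v + 1)
        + charPow χ 1 v * charPow χ ((l * m : ℕ) : ℤ) (v + 1) := fun v => by ring
    simp_rw [this]
    rw [Finset.sum_add_distrib, Finset.sum_sub_distrib, Finset.sum_sub_distrib, hsa, hsb]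
    simp only [Finset.sum_const, Finset.card_univ, hcard, jSum, nsmul_eq_mul]
    ring
  have hne1 : (1 - ζ) ≠ 0 := sub_ne_zero.mpr hζ1.symm
  have hne2 : (1 - ζ ^ l) ≠ 0 := sub_ne_zero.mpr hω1.symm
  have hA := lam_int l hl0 ζ hζi hζ1 hωp
  rw [key, sub_div, Finset.sum_div]
  refine IsIntegral.sub (IsIntegral.sum _ fun v _ => ?_) ?_
  · by_cases hv : v = 0
    · have : charPow χ ((l * m : ℕ) : ℤ) (v + 1) = 1 := by simp [charPow, hv, hχ1]
      rw [this]; simpa using isIntegral_zero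
    by_cases hv1 : v + 1 = 0
    · have hv2 : v = -1 := eq_neg_of_add_eq_zero_left hv1
      have : charPow χ 1 v = 1 := by simp [charPow, hv2, hχm]
      rw [this]; simpa using isIntegral_zero
    obtain ⟨j, hj⟩ := hχv v hv
    obtain ⟨k, hk⟩ := hχv (v + 1) hv1
    have e1 : charPow χ 1 v = ζ ^ j := by simp [charPow, hv, hj]
    have e2 : charPow χ ((l * m : ℕ) : ℤ) (v + 1) = (ζ ^ l) ^ (m * k) := by
      rw [charPow, if_neg hv1, zpow_natCast, hk]; ring
    rw [e1, e2]
    have e3 : (1 - ζ ^ j) * (1 - (ζ ^ l) ^ (m * k)) / (1 - ζ) ^ (l + 1) =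
        ((1 - ζ ^ j) / (1 - ζ)) * (((1 - (ζ ^ l) ^ (m * k)) / (1 - ζ ^ l)) *
          ((1 - ζ ^ l) / (1 - ζ) ^ l)) := by
      rw [div_mul_div_cancel₀ hne2, div_mul_div_comm, pow_succ']
    rw [e3]
    exact (geom_int ζ hζi hζ1 j).mul ((geom_int _ hωi hω1 _).mul hA)
  · have hB := l_int l (by omega) _ hωp
    obtain ⟨c, hc⟩ : ∃ c : ℕ, q = l ^ 2 * c + 1 := ⟨q / l ^ 2, by
      have := Nat.div_add_mod q (l ^ 2); omega⟩
    obtain ⟨d, hd⟩ : ∃ d : ℕ, l + l = l + 1 + d := ⟨l - 1, by omega⟩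
    have e4 : ((q : ℂ) - 1) / (1 - ζ) ^ (l + 1) =
        (c : ℂ) * ((l : ℂ) / (1 - ζ ^ l) * ((1 - ζ ^ l) / (1 - ζ) ^ l)) ^ 2 * (1 - ζ) ^ d := by
      rw [div_mul_div_cancel₀ hne2, div_pow, ← pow_mul, mul_two, hd, pow_add, hc]
      push_cast
      field_simp
      ring
    rw [e4]
    have hcI : IsIntegral ℤ (c : ℂ) := by
      simpa using (isIntegral_algebraMap (R := ℤ) (A := ℂ) (x := (c : ℤ)))
    exact (hcI.mul ((hB.mul hA).pow 2)).mul ((isIntegral_one.sub hζi).pow d)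
end

section
/- Let n be an integer with 1 ≤ n ≤ l²−1 and gcd(l, n) = 1. Then there exist rational integers c_3, c_4, …, c_l (depending on n) such that J_{l²}(1,n) ≡ −1 + Σ_{i=3}^{l} c_i (ζ_{l²} − 1)^i (mod (1−ζ_{l²})^{l+1}). -/
open Complex Finset

theorem aux_trunc (ζ : ℂ) (m : ℕ) (y : ℂ) (hy : y ∈ Algebra.adjoin ℤ {ζ}) :
    ∃ c : ℕ → ℤ, ∃ z ∈ Algebra.adjoin ℤ {ζ},
      y = ∑ i ∈ Finset.range m, (c i : ℂ) * (ζ - 1) ^ i + (ζ - 1) ^ m * z := by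
  have hζ : ζ ∈ Algebra.adjoin ℤ {ζ} := Algebra.self_mem_adjoin_singleton ℤ ζ
  have hint : ∀ a : ℤ, (a : ℂ) ∈ Algebra.adjoin ℤ {ζ} := fun a => by
    simpa using (Algebra.adjoin ℤ {ζ}).algebraMap_mem a
  have key : ∀ y ∈ Algebra.adjoin ℤ {ζ}, ∃ c : ℤ, ∃ z ∈ Algebra.adjoin ℤ {ζ},
      y = c + (ζ - 1) * z := by
    intro y hy
    induction hy using Algebra.adjoin_induction with
    | mem x hx =>
      rw [Set.mem_singleton_iff] at hx
      exact ⟨1, 1, one_mem _, by subst hx; push_cast; ring⟩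
    | algebraMap r => exact ⟨r, 0, zero_mem _, by simp⟩
    | add x y _ _ hx hy =>
      obtain ⟨c, z, hz, rfl⟩ := hx
      obtain ⟨d, w, hw, rfl⟩ := hy
      exact ⟨c + d, z + w, add_mem hz hw, by push_cast; ring⟩
    | mul x y _ hy' hx hy =>
      obtain ⟨c, z, hz, rfl⟩ := hx
      obtain ⟨d, w, hw, rfl⟩ := hy
      exact ⟨c * d, c * w + z * (d + (ζ - 1) * w),
        add_mem (mul_mem (hint c) hw) (mul_mem hz hy'), by push_cast; ring⟩
  induction m with
  | zero => exact ⟨0, y, hy, by simp⟩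
  | succ m ih =>
    obtain ⟨c, z, hz, h⟩ := ih
    obtain ⟨d, w, hw, rfl⟩ := key z hz
    refine ⟨Function.update c m d, w, hw, ?_⟩
    rw [Finset.sum_range_succ, Function.update_self, h]
    have : ∑ i ∈ Finset.range m, ((Function.update c m d i : ℤ) : ℂ) * (ζ - 1) ^ i =
        ∑ i ∈ Finset.range m, (c i : ℂ) * (ζ - 1) ^ i := by
      refine Finset.sum_congr rfl fun i hi => ?_
      rw [Function.update_of_ne (Finset.mem_range.mp hi).ne]
    rw [this]; ring

theorem aux_pow {A : Type*} [CommRing A] (z : A) (k : ℕ) :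
    ∃ y, z ^ k - 1 = k * (z - 1) + (z - 1) ^ 2 * y := by
  induction k with
  | zero => exact ⟨0, by simp⟩
  | succ k ih =>
    obtain ⟨y, hy⟩ := ih
    refine ⟨y * z + k, ?_⟩
    have : z ^ k = 1 + k * (z - 1) + (z - 1) ^ 2 * y := by rw [add_assoc, ← hy]; ring
    rw [pow_succ, this]; push_cast; ring

theorem aux_sum {A ι : Type*} [CommRing A] (z : A) (l : ℕ) (hl : (z - 1) ^ 3 ∣ (l : A))
    (s : Finset ι) (a b : ι → ℕ) (n : ℕ) (h : l ∣ ∑ i ∈ s, a i * b i) :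
    (z - 1) ^ 3 ∣ ∑ i ∈ s, (z ^ a i - 1) * ((z ^ b i) ^ n - 1) := by
  have h1 : ∀ i, (z - 1) ^ 3 ∣
      (z ^ a i - 1) * ((z ^ b i) ^ n - 1) - (z - 1) ^ 2 * n * ((a i * b i : ℕ) : A) := by
    intro i
    rw [← pow_mul]
    obtain ⟨y, hy⟩ := aux_pow z (a i)
    obtain ⟨w, hw⟩ := aux_pow z (b i * n)
    rw [hy, hw]
    refine ⟨y * (b i * n) + a i * w + (z - 1) * y * w, ?_⟩
    push_cast; ring
  have h2 := Finset.dvd_sum (s := s) fun i _ => h1 i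
  rw [Finset.sum_sub_distrib, ← Finset.mul_sum, ← Nat.cast_sum] at h2
  have h3 : (z - 1) ^ 3 ∣ (z - 1) ^ 2 * n * ((∑ i ∈ s, a i * b i : ℕ) : A) :=
    Dvd.dvd.mul_left (hl.trans (Nat.cast_dvd_cast h)) _
  exact (dvd_sub_left h3).mp h2

theorem aux_l {A : Type*} [CommRing A] [IsDomain A] (z : A) (l : ℕ) (hl : l.Prime) (hl3 : 3 ≤ l)
    (hz : IsPrimitiveRoot z (l ^ 2)) : (z - 1) ^ 3 ∣ (l : A) := by
  have : Fact l.Prime := ⟨hl⟩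
  have h1 : (l : A) = ∏ μ ∈ primitiveRoots (l ^ 2) A, (1 - μ) := by
    have := Polynomial.eval_one_cyclotomic_prime_pow (R := A) (p := l) 1
    rw [Polynomial.cyclotomic_eq_prod_X_sub_primitiveRoots hz, Polynomial.eval_prod] at this
    simpa using this.symm
  have h2 : ∏ μ ∈ primitiveRoots (l ^ 2) A, (z - 1) ∣ ∏ μ ∈ primitiveRoots (l ^ 2) A, (1 - μ) := by
    refine Finset.prod_dvd_prod_of_dvd _ _ fun μ hμ => ?_
    have hμ := isPrimitiveRoot_of_mem_primitiveRoots hμ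
    have : NeZero (l ^ 2) := ⟨pow_ne_zero _ hl.ne_zero⟩
    obtain ⟨i, _, rfl⟩ := hz.eq_pow_of_pow_eq_one hμ.pow_eq_one
    rw [dvd_sub_comm]
    exact sub_one_dvd_pow_sub_one z i
  rw [h1]
  refine dvd_trans ?_ h2
  rw [Finset.prod_const, hz.card_primitiveRoots]
  refine pow_dvd_pow _ ?_
  rw [Nat.totient_prime_pow hl (by norm_num)]
  have : 2 ≤ l - 1 := by omega
  simp only [Nat.add_one_sub_one, pow_one]
  nlinarith

theorem aux_units {F M : Type*} [Field F] [Fintype F] [DecidableEq F] [AddCommMonoid M]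
    (f : F → M) : ∑ v, f v = f 0 + ∑ u : Fˣ, f u := by
  rw [Fintype.sum_eq_add_sum_subtype_ne f 0, ← Equiv.sum_comp unitsEquivNeZero]
  rfl

theorem aux_index {F : Type*} [Field F] [Fintype F] [DecidableEq F] (N : ℕ)
    (hN : N ∣ Fintype.card Fˣ) (γ : F) (hγ : γ ≠ 0)
    (a : F → ZMod N) (a0 : a 0 = 0) (aγ : a γ = 1) (am1 : a (-1) = 0)
    (amul : ∀ x y, x ≠ 0 → y ≠ 0 → a (x * y) = a x + a y) :
    12 * ∑ v, a v * a (v + 1) = 0 := by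
  have a1 : a 1 = 0 := by
    have := amul 1 1 one_ne_zero one_ne_zero
    simpa using this
  have ainv : ∀ v, a v⁻¹ = - a v := by
    intro v
    by_cases hv : v = 0
    · simp [hv, a0]
    · have := amul v v⁻¹ hv (inv_ne_zero hv)
      rw [mul_inv_cancel₀ hv, a1] at this
      exact eq_neg_of_add_eq_zero_right this.symm
  have hS : 2 * ∑ v, a v * a (v + 1) = ∑ v, a v ^ 2 := by
    have h : ∑ v, a v * a (v + 1) = ∑ v, (a v ^ 2 - a v * a (v + 1)) := by
      rw [← Equiv.sum_comp (Equiv.inv F) (fun v => a v * a (v + 1))]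
      refine Finset.sum_congr rfl fun v _ => ?_
      simp only [Equiv.inv_apply, ainv]
      by_cases hv : v = 0
      · simp [hv, a0]
      by_cases hv1 : v + 1 = 0
      · rw [eq_neg_of_add_eq_zero_left hv1]; simp [am1]
      have : v⁻¹ + 1 = (v + 1) * v⁻¹ := by field_simp; ring
      rw [this, amul _ _ hv1 (inv_ne_zero hv), ainv]; ring
    rw [Finset.sum_sub_distrib] at h
    linear_combination h
  have hU : ∑ v, a v ^ 2 = ∑ u : Fˣ, a u ^ 2 := by
    rw [aux_units]; simp [a0]
  have hc : ((Fintype.card Fˣ : ℕ) : ZMod N) = 0 := (ZMod.natCast_eq_zero_iff _ _).mpr hN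
  have ash : ∀ u : Fˣ, a ((Units.mk0 γ hγ * u : Fˣ) : F) = a u + 1 := by
    intro u
    rw [Units.val_mul, amul _ _ (by simp [hγ]) u.ne_zero, Units.val_mk0, aγ, add_comm]
  have h2 : 2 * ∑ u : Fˣ, a u = 0 := by
    have := Equiv.sum_comp (Equiv.mulLeft (Units.mk0 γ hγ)) (fun u : Fˣ => a u ^ 2)
    simp only [Equiv.coe_mulLeft, ash, add_sq, Finset.sum_add_distrib, mul_one, one_pow,
      ← Finset.mul_sum, Finset.sum_const, Finset.card_univ, nsmul_eq_mul, hc] at this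
    linear_combination this
  have h3 : 3 * ∑ u : Fˣ, a u ^ 2 + 3 * ∑ u : Fˣ, a u = 0 := by
    have := Equiv.sum_comp (Equiv.mulLeft (Units.mk0 γ hγ)) (fun u : Fˣ => a u ^ 3)
    have e : ∀ x : ZMod N, (x + 1) ^ 3 = x ^ 3 + 3 * x ^ 2 + 3 * x + 1 := fun x => by ring
    simp only [Equiv.coe_mulLeft, ash, e, Finset.sum_add_distrib, 
      ← Finset.mul_sum, Finset.sum_const, Finset.card_univ, nsmul_eq_mul, mul_one, hc] at this
    linear_combination this
  rw [hU] at hS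
  linear_combination 6 * hS + 2 * h3 - 3 * h2

theorem jacobiSum_lsq_coprime {F : Type*} [Field F] [Fintype F] [DecidableEq F]
    (l p r q : ℕ) (hl : l.Prime) (hl3 : 3 ≤ l) (hp : p.Prime) (hr : 0 < r)
    (hq : q = p ^ r) (hql : q % l ^ 2 = 1) (hcard : Fintype.card F = q)
    (γ : F) (hγ : ∀ x : F, x ≠ 0 → ∃ k : ℕ, γ ^ k = x)
    (ζ : ℂ) (hζ : ζ = Complex.exp (2 * Real.pi * Complex.I / ((l ^ 2 : ℕ) : ℂ)))
    (χ : F → ℂ) (hχ0 : χ 0 = 0) (hχγ : χ γ = ζ)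
    (hχmul : ∀ x y : F, χ (x * y) = χ x * χ y)
    (n : ℤ) (hn1 : 1 ≤ n) (hn2 : n ≤ (l : ℤ) ^ 2 - 1) (hln : IsCoprime (l : ℤ) n) :
    ∃ c : ℕ → ℤ,
      IsIntegral ℤ ((jSum χ 1 n - (-1 + ∑ i ∈ Finset.Icc 3 l, (c i : ℂ) * (ζ - 1) ^ i)) /
        (1 - ζ) ^ (l + 1)) := by
  have hN0 : l ^ 2 ≠ 0 := pow_ne_zero _ hl.ne_zero
  have hN9 : 9 ≤ l ^ 2 := by nlinarith
  have hodd : ¬ 2 ∣ l := by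
    intro h
    have := (Nat.prime_dvd_prime_iff_eq Nat.prime_two hl).mp h
    omega
  have hprim : IsPrimitiveRoot ζ (l ^ 2) := by
    rw [hζ]; exact Complex.isPrimitiveRoot_exp _ hN0
  have hζ0 : ζ ≠ 0 := hprim.ne_zero hN0
  have hγ0 : γ ≠ 0 := by
    rintro rfl
    exact hζ0 (hχγ.symm.trans hχ0)
  have hχ1 : χ 1 = 1 := by
    have := hχmul γ 1
    rw [mul_one, hχγ] at this
    exact (mul_eq_left₀ hζ0).mp this.symm
  have hχpow : ∀ k : ℕ, χ (γ ^ k) = ζ ^ k := by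
    intro k
    induction k with
    | zero => simpa using hχ1
    | succ k ih => rw [pow_succ, hχmul, ih, hχγ, pow_succ]
  have hex : ∀ x : F, ∃ k : ℕ, (x = 0 → k = 0) ∧ (x ≠ 0 → χ x = ζ ^ k) := by
    intro x
    by_cases hx : x = 0
    · exact ⟨0, fun _ => rfl, fun h => absurd hx h⟩
    · obtain ⟨k, rfl⟩ := hγ x hx
      exact ⟨k, fun h => absurd h hx, fun _ => hχpow k⟩
  choose k hk0 hk using hex
  have hk00 : k 0 = 0 := hk0 0 rfl
  have hmod : ∀ i j : ℕ, ζ ^ i = ζ ^ j → (i : ZMod (l ^ 2)) = j := by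
    intro i j h
    rw [ZMod.natCast_eq_natCast_iff]
    have hu : l ^ 2 = orderOf (Units.mk0 ζ hζ0) := by
      rw [← orderOf_units, Units.val_mk0, ← hprim.eq_orderOf]
    rw [hu]
    refine pow_eq_pow_iff_modEq.mp (Units.ext ?_)
    simpa using h
  -- value at -1
  have hm1 : ζ ^ k (-1) = 1 := by
    have h1 : (ζ ^ k (-1)) ^ 2 = 1 := by
      rw [← hk (-1) (by simp), sq, ← hχmul]; simpa using hχ1
    rw [← pow_mul] at h1
    have h2 := (hprim.pow_eq_one_iff_dvd _).mp h1
    have h3 : Nat.Coprime (l ^ 2) 2 :=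
      Nat.Coprime.pow_left 2 ((Nat.coprime_comm.mp ((Nat.prime_two.coprime_iff_not_dvd).mpr hodd)))
    exact (hprim.pow_eq_one_iff_dvd _).mpr (h3.dvd_of_dvd_mul_right h2)
  have hk1 : ζ ^ k 1 = 1 := by rw [← hk 1 one_ne_zero, hχ1]
  have hcardU : l ^ 2 ∣ Fintype.card Fˣ := by
    rw [Fintype.card_units, hcard, ← hql]
    exact Nat.dvd_sub_mod q
  have hS : l ∣ ∑ v, k v * k (v + 1) := by
    have h := aux_index (l ^ 2) hcardU γ hγ0 (fun x => (k x : ZMod (l ^ 2)))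
      (by simp [hk00])
      (by simpa using hmod (k γ) 1 (by rw [← hk γ hγ0, hχγ, pow_one]))
      (by simpa using hmod (k (-1)) 0 (by rw [hm1, pow_zero]))
      (by
        intro x y hx hy
        have := hmod (k (x * y)) (k x + k y)
          (by rw [← hk _ (mul_ne_zero hx hy), hχmul, pow_add, hk x hx, hk y hy])
        simpa using this)
    have h' : ((12 * ∑ v, k v * k (v + 1) : ℕ) : ZMod (l ^ 2)) = 0 := by
      push_cast; exact h
    rw [ZMod.natCast_eq_zero_iff] at h'
    by_contra hcon
    have hc : Nat.Coprime (l ^ 2) (∑ v, k v * k (v + 1)) :=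
      Nat.Coprime.pow_left 2 ((hl.coprime_iff_not_dvd).mpr hcon)
    have h12 := hc.dvd_of_dvd_mul_right h'
    have hle := Nat.le_of_dvd (by norm_num) h12
    have hl' : l = 3 := by nlinarith
    subst hl'
    revert h12; norm_num
  obtain ⟨m, rfl⟩ : ∃ m : ℕ, n = m := ⟨n.toNat, by omega⟩
  have hm0 : 0 < m := by omega
  have hml : m < l ^ 2 := by zify; omega
  have hcp : ∀ (j : ℕ) (v : F), charPow χ j v = (ζ ^ k v) ^ j - if v = 0 then 1 else 0 := by
    intro j v
    unfold charPow
    by_cases hv : v = 0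
    · simp [hv, hk00]
    · simp [hv, hk v hv]
  have hsum : ∀ j : ℕ, 0 < j → j < l ^ 2 → ∑ v, (ζ ^ k v) ^ j = 1 := by
    intro j hj hjl
    rw [aux_units, hk00]
    have hsh := Equiv.sum_comp (Equiv.mulLeft (Units.mk0 γ hγ0)) (fun u : Fˣ => (ζ ^ k u) ^ j)
    have : ∀ u : Fˣ, (ζ ^ k ((Units.mk0 γ hγ0 * u : Fˣ) : F)) ^ j = ζ ^ j * (ζ ^ k u) ^ j := by
      intro u
      rw [← hk _ (Units.ne_zero _), Units.val_mul, hχmul, Units.val_mk0, hχγ, hk _ u.ne_zero,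
        mul_pow]
    simp only [Equiv.coe_mulLeft, this, ← Finset.mul_sum] at hsh
    have hne := hprim.pow_ne_one_of_pos_of_lt hj.ne' hjl
    have hz : (ζ ^ j - 1) * ∑ u : Fˣ, (ζ ^ k u) ^ j = 0 := by linear_combination hsh
    rcases mul_eq_zero.mp hz with h | h
    · exact absurd (sub_eq_zero.mp h) hne
    · rw [h]; simp
  have hJ : jSum χ 1 m + q = ∑ v, (ζ ^ k v - 1) * ((ζ ^ k (v + 1)) ^ m - 1) := by
    have e1 : jSum χ 1 m = ∑ v, ζ ^ k v * (ζ ^ k (v + 1)) ^ m - 2 := by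
      unfold jSum
      have t : ∀ v : F, charPow χ 1 v * charPow χ m (v + 1) =
          ζ ^ k v * (ζ ^ k (v + 1)) ^ m - (if v = 0 then 1 else 0) - (if v = -1 then 1 else 0) := by
        intro v
        have h1 := hcp 1 v
        rw [Nat.cast_one] at h1
        rw [h1, hcp m (v + 1)]
        by_cases hv : v = 0
        · subst hv
          simp [hk00, hk1]
        by_cases hv1 : v = -1
        · subst hv1
          simp [hk00, hm1]
        have : v + 1 ≠ 0 := fun h => hv1 (eq_neg_of_add_eq_zero_left h)
        simp [hv, hv1, this]
      simp only [t, Finset.sum_sub_distrib, Finset.sum_ite_eq', Finset.mem_univ, if_true]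
      ring
    have e2 := hsum 1 one_pos (by omega)
    have e3 : ∑ v, (ζ ^ k (v + 1)) ^ m = 1 := by
      rw [← hsum m hm0 hml]
      exact Equiv.sum_comp (Equiv.addRight (1 : F)) (fun v => (ζ ^ k v) ^ m)
    have e4 : ∀ v : F, (ζ ^ k v - 1) * ((ζ ^ k (v + 1)) ^ m - 1) =
        ζ ^ k v * (ζ ^ k (v + 1)) ^ m - (ζ ^ k v) ^ 1 - (ζ ^ k (v + 1)) ^ m + 1 := by
      intro v; ring
    simp only [e4, Finset.sum_add_distrib, Finset.sum_sub_distrib, e2, e3, e1]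
    simp [hcard]
    ring
  -- the ring ℤ[ζ]
  have hmem : ζ ∈ Algebra.adjoin ℤ {ζ} := Algebra.self_mem_adjoin_singleton ℤ ζ
  let z : Algebra.adjoin ℤ {ζ} := ⟨ζ, hmem⟩
  have hz : IsPrimitiveRoot z (l ^ 2) := by
    refine IsPrimitiveRoot.of_map_of_injective (f := (Algebra.adjoin ℤ {ζ}).val) hprim ?_
    exact Subtype.val_injective
  have hld := aux_l z l hl hl3 hz
  obtain ⟨y1, hy1⟩ := aux_sum z l hld Finset.univ k (fun v => k (v + 1)) m hS
  have hq1 : l ∣ q - 1 := by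
    rw [← hcard, ← Fintype.card_units]
    exact (dvd_pow_self l two_ne_zero).trans hcardU
  obtain ⟨y2, hy2⟩ := hld.trans (Nat.cast_dvd_cast (α := Algebra.adjoin ℤ {ζ}) hq1)
  have hqpos : 1 ≤ q := by rw [← hcard]; exact Fintype.card_pos
  have hy1' := congrArg (Subtype.val) hy1
  have hy2' := congrArg (Subtype.val) hy2
  push_cast [Nat.cast_sub hqpos] at hy1' hy2'
  change ∑ v, (ζ ^ k v - 1) * ((ζ ^ k (v + 1)) ^ m - 1) = (ζ - 1) ^ 3 * (y1 : ℂ) at hy1'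
  change (q : ℂ) - 1 = (ζ - 1) ^ 3 * (y2 : ℂ) at hy2'
  have hfin : jSum χ 1 m = -1 + (ζ - 1) ^ 3 * ((y1 - y2 : Algebra.adjoin ℤ {ζ}) : ℂ) := by
    push_cast
    linear_combination hJ + hy1' - hy2'
  obtain ⟨c, w, hw, hc⟩ := aux_trunc ζ (l - 2) _ (y1 - y2).2
  refine ⟨fun i => c (i - 3), ?_⟩
  have hζint : IsIntegral ℤ ζ := hprim.isIntegral (Nat.pos_of_ne_zero hN0)
  have hwint : IsIntegral ℤ w := by
    have : Algebra.adjoin ℤ {ζ} ≤ integralClosure ℤ ℂ :=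
      Algebra.adjoin_le (Set.singleton_subset_iff.mpr hζint)
    exact this hw
  have hne : (1 - ζ) ^ (l + 1) ≠ 0 := by
    refine pow_ne_zero _ fun h => ?_
    exact hprim.ne_one (by omega) (sub_eq_zero.mp h).symm
  have hI : ∑ i ∈ Finset.Icc 3 l, ((c (i - 3) : ℤ) : ℂ) * (ζ - 1) ^ i =
      (ζ - 1) ^ 3 * ∑ i ∈ Finset.range (l - 2), (c i : ℂ) * (ζ - 1) ^ i := by
    rw [Finset.mul_sum, ← Finset.Ico_add_one_right_eq_Icc, Finset.sum_Ico_eq_sum_range]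
    refine Finset.sum_congr (by congr 1) fun i _ => ?_
    rw [Nat.add_sub_cancel_left, pow_add]; ring
  have hval : (jSum χ 1 m - (-1 + ∑ i ∈ Finset.Icc 3 l, ((c (i - 3) : ℤ) : ℂ) * (ζ - 1) ^ i)) /
        (1 - ζ) ^ (l + 1) = (-1) ^ (l + 1) * w := by
    rw [div_eq_iff hne, hfin, hI, hc]
    have e : (ζ - 1) ^ (l + 1) = (ζ - 1) ^ 3 * (ζ - 1) ^ (l - 2) := by
      rw [← pow_add]; congr 1; omega
    have e' : (ζ - 1) ^ (l + 1) = (-1) ^ (l + 1) * (1 - ζ) ^ (l + 1) := by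
      rw [← mul_pow]; congr 1; ring
    linear_combination (-w) * e + w * e'
  rw [hval]
  exact (((isIntegral_one).neg).pow _).mul hwint
end

section
/- Let w be an integer with γ^w = 2 in F_q (w = ind_γ 2). Then there exist rational integers c_3, c_4, …, c_l such that J_{2l²}(1, l²) ≡ ζ_{l²}^{−w}·(−1 + Σ_{i=3}^{l} c_i (ζ_{l²} − 1)^i) (mod (1−ζ_{l²})^{l+1}). -/
open Complex Finset

/-- `z` is divisible by `(μ-1)^n` in `ℤ[μ]`. -/
def DvdPow (μ : ℂ) (n : ℕ) (z : ℂ) : Prop :=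
  ∃ y ∈ Algebra.adjoin ℤ {μ}, z = y * (μ - 1) ^ n

lemma DvdPow.add' {μ : ℂ} {n : ℕ} {a b : ℂ} (ha : DvdPow μ n a) (hb : DvdPow μ n b) :
    DvdPow μ n (a + b) := by
  obtain ⟨x, hx, rfl⟩ := ha
  obtain ⟨y, hy, rfl⟩ := hb
  exact ⟨x + y, add_mem hx hy, by ring⟩

lemma DvdPow.neg' {μ : ℂ} {n : ℕ} {a : ℂ} (ha : DvdPow μ n a) : DvdPow μ n (-a) := by
  obtain ⟨x, hx, rfl⟩ := ha
  exact ⟨-x, neg_mem hx, by ring⟩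

lemma DvdPow.sub' {μ : ℂ} {n : ℕ} {a b : ℂ} (ha : DvdPow μ n a) (hb : DvdPow μ n b) :
    DvdPow μ n (a - b) := by
  rw [sub_eq_add_neg]; exact ha.add' hb.neg'

lemma DvdPow.zero' (μ : ℂ) (n : ℕ) : DvdPow μ n 0 := ⟨0, zero_mem _, by ring⟩

lemma DvdPow.mul' {μ : ℂ} {m n : ℕ} {a b : ℂ} (ha : DvdPow μ m a) (hb : DvdPow μ n b) :
    DvdPow μ (m + n) (a * b) := by
  obtain ⟨x, hx, rfl⟩ := ha
  obtain ⟨y, hy, rfl⟩ := hb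
  exact ⟨x * y, mul_mem hx hy, by ring⟩

lemma DvdPow.of_mem {μ : ℂ} {a : ℂ} (ha : a ∈ Algebra.adjoin ℤ {μ}) : DvdPow μ 0 a :=
  ⟨a, ha, by simp⟩

lemma DvdPow.sum' {μ : ℂ} {n : ℕ} {ι : Type*} (s : Finset ι) (f : ι → ℂ)
    (h : ∀ i ∈ s, DvdPow μ n (f i)) : DvdPow μ n (∑ i ∈ s, f i) := by
  classical
  induction s using Finset.induction_on with
  | empty => simpa using DvdPow.zero' μ n
  | insert a s ha ih =>
    rw [Finset.sum_insert ha]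
    exact (h a (by simp)).add' (ih fun i hi => h i (by simp [hi]))

lemma pow_mem_adj (μ : ℂ) (k : ℕ) : μ ^ k ∈ Algebra.adjoin ℤ {μ} :=
  pow_mem (Algebra.self_mem_adjoin_singleton ℤ μ) k

lemma dvdPow_pow_sub_one (μ : ℂ) (k : ℕ) : DvdPow μ 1 (μ ^ k - 1) :=
  ⟨∑ i ∈ Finset.range k, μ ^ i, sum_mem fun i _ => pow_mem_adj μ i, by
    rw [pow_one, geom_sum_mul]⟩

lemma adj_step {μ y : ℂ} (hy : y ∈ Algebra.adjoin ℤ {μ}) :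
    ∃ a : ℤ, ∃ z ∈ Algebra.adjoin ℤ {μ}, y = a + (μ - 1) * z := by
  induction hy using Algebra.adjoin_induction with
  | mem x hx =>
    rw [Set.mem_singleton_iff] at hx
    exact ⟨1, 1, one_mem _, by rw [hx]; push_cast; ring⟩
  | algebraMap r => exact ⟨r, 0, zero_mem _, by simp⟩
  | add x y hx hy h1 h2 =>
    obtain ⟨a, z, hz, e1⟩ := h1
    obtain ⟨b, t, ht, e2⟩ := h2
    exact ⟨a + b, z + t, add_mem hz ht, by rw [e1, e2]; push_cast; ring⟩
  | mul x y hx hy h1 h2 =>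
    obtain ⟨a, z, hz, e1⟩ := h1
    obtain ⟨b, t, ht, e2⟩ := h2
    refine ⟨a * b, z * y + a * t, add_mem (mul_mem hz hy) (mul_mem (intCast_mem _ a) ht), ?_⟩
    rw [e1]
    nth_rewrite 1 [e2]
    push_cast
    ring_nf
    rw [e2]; ring

lemma adj_expand {μ y : ℂ} (hy : y ∈ Algebra.adjoin ℤ {μ}) (n : ℕ) :
    ∃ c : ℕ → ℤ, ∃ z ∈ Algebra.adjoin ℤ {μ},
      y = ∑ i ∈ Finset.range n, (c i : ℂ) * (μ - 1) ^ i + (μ - 1) ^ n * z := by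
  induction n with
  | zero => exact ⟨0, y, hy, by simp⟩
  | succ n ih =>
    obtain ⟨c, z, hz, e⟩ := ih
    obtain ⟨a, t, ht, e2⟩ := adj_step hz
    refine ⟨fun i => if i = n then a else c i, t, ht, ?_⟩
    rw [Finset.sum_range_succ]
    have : ∑ i ∈ Finset.range n, (((if i = n then a else c i : ℤ)) : ℂ) * (μ - 1) ^ i
        = ∑ i ∈ Finset.range n, (c i : ℂ) * (μ - 1) ^ i := by
      refine Finset.sum_congr rfl fun i hi => ?_
      rw [if_neg (Finset.mem_range.mp hi).ne]
    rw [this, e, e2]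
    simp only [if_true]
    ring

/-- The Jacobi sum of `ψ` with itself is `-1` modulo `(μ-1)^3`. -/
lemma jac_cong {F : Type*} [Field F] [Fintype F] [DecidableEq F] (μ : ℂ) (N m : ℕ)
    (hN : Odd N) (hμ : IsPrimitiveRoot μ N) (hN3 : 3 < N)
    (hq : Fintype.card F = N * m + 1) (ψ : MulChar F ℂ) (hψ : ψ ≠ 1) (hψ2 : ψ ^ 2 ≠ 1)
    (hneg : ψ (-1) = 1) (hval : ∀ x : F, x ≠ 0 → ∃ k : ℕ, ψ x = μ ^ k) :
    DvdPow μ 3 ((∑ x : F, ψ x * ψ (1 - x)) + 1) := by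
  have hND : DvdPow μ 3 (N : ℂ) := by
    obtain ⟨z, hz, e⟩ := hμ.self_sub_one_pow_dvd_order hN3
    exact ⟨z, hz, e⟩
  have hNm : DvdPow μ 3 ((N : ℂ) * m) := by
    simpa using hND.mul' (DvdPow.of_mem (natCast_mem _ m))
  have hs1 : ∑ x : F, ψ x = 0 := MulChar.sum_eq_zero_of_ne_one hψ
  have hs2 : ∑ x : F, ψ x ^ 2 = 0 := by
    rw [← MulChar.sum_eq_zero_of_ne_one hψ2]
    exact Finset.sum_congr rfl fun x _ => (MulChar.pow_apply' ψ two_ne_zero x).symm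
  have hs1' : ∑ x : F, ψ (1 - x) = 0 := by
    rw [← hs1]; exact (Equiv.subLeft (1 : F)).sum_comp (fun x => ψ x)
  set f : F → ℂ := fun x => (ψ x - 1) * (ψ (1 - x) - 1) with hf
  have hcard : (Fintype.card F : ℂ) = N * m + 1 := by rw [hq]; push_cast; ring
  have hT : ∑ x : F, f x = (∑ x : F, ψ x * ψ (1 - x)) + (N * m + 1) := by
    have : ∀ x, f x = ψ x * ψ (1 - x) - ψ x - ψ (1 - x) + 1 := fun x => by simp only [hf]; ring
    simp only [this, Finset.sum_add_distrib, Finset.sum_sub_distrib, hs1, hs1']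
    simp [hcard]
  set g : F → ℂ := fun x => (ψ x - 1) ^ 2 - (if x = 0 then 1 else 0) with hg
  have hG : ∑ x : F, g x = N * m := by
    have : ∀ x, g x = ψ x ^ 2 - 2 * ψ x + 1 - (if x = 0 then 1 else 0) := fun x => by
      simp only [hg]; ring
    simp only [this, Finset.sum_add_distrib, Finset.sum_sub_distrib, hs1, hs2, ← Finset.mul_sum]
    simp [hcard]
  have hinv : ∑ x : F, f x⁻¹ = ∑ x : F, f x :=
    Equiv.sum_comp (Equiv.inv F) f
  have key : ∀ x : F, DvdPow μ 3 (f x + f x⁻¹ - g x) := by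
    intro x
    by_cases h0 : x = 0
    · have : f x + f x⁻¹ - g x = 0 := by simp [hf, hg, h0, MulChar.map_zero]
      rw [this]; exact DvdPow.zero' _ _
    by_cases h1 : x = 1
    · have : f x + f x⁻¹ - g x = 0 := by simp [hf, hg, h1]
      rw [this]; exact DvdPow.zero' _ _
    have h1x : (1 : F) - x ≠ 0 := sub_ne_zero.mpr (Ne.symm h1)
    obtain ⟨i, hi⟩ := hval x h0
    obtain ⟨j, hj⟩ := hval (1 - x) h1x
    obtain ⟨k, hk⟩ := hval x⁻¹ (inv_ne_zero h0)
    have hik : μ ^ i * μ ^ k = 1 := by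
      rw [← hi, ← hk, ← map_mul, mul_inv_cancel₀ h0, map_one]
    have hb : ψ (1 - x⁻¹) = μ ^ j * μ ^ k := by
      have : 1 - x⁻¹ = (-1) * (1 - x) * x⁻¹ := by field_simp; ring
      rw [this, map_mul, map_mul, hneg, hj, hk, one_mul]
    have e : f x + f x⁻¹ - g x =
        (μ ^ i - 1) * ((μ ^ j - 1) - (μ ^ i - 1)) * (μ ^ i - 1) * (μ ^ k * (1 + μ ^ k)) := by
      simp only [hf, hg, hi, hj, hk, hb, if_neg h0]
      have g1 : μ ^ k - 1 = -(μ ^ i - 1) * μ ^ k := by linear_combination hik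
      have g2 : μ ^ j * μ ^ k - 1 = (μ ^ j - μ ^ i) * μ ^ k := by linear_combination hik
      have g3 : 1 - μ ^ k * μ ^ k = (μ ^ i - 1) * μ ^ k * (1 + μ ^ k) := by
        linear_combination (-1 - μ ^ k) * hik
      linear_combination (μ ^ j * μ ^ k - 1) * g1 + (-(μ ^ i - 1) * μ ^ k) * g2 +
        (μ ^ i - 1) * (μ ^ j - μ ^ i) * g3
    rw [e]
    have hA := dvdPow_pow_sub_one μ i
    have hB := dvdPow_pow_sub_one μ j
    have hC : DvdPow μ 0 (μ ^ k * (1 + μ ^ k)) :=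
      DvdPow.of_mem (mul_mem (pow_mem_adj μ k) (add_mem (one_mem _) (pow_mem_adj μ k)))
    exact ((hA.mul' (hB.sub' hA)).mul' hA).mul' hC
  have h2T : DvdPow μ 3 (2 * ∑ x : F, f x) := by
    have h := (DvdPow.sum' Finset.univ _ fun x _ => key x).add' hNm
    rw [Finset.sum_sub_distrib, Finset.sum_add_distrib, hinv, hG] at h
    convert h using 1; ring
  have hTmem : ∑ x : F, f x ∈ Algebra.adjoin ℤ {μ} := by
    have hv : ∀ x, ψ x ∈ Algebra.adjoin ℤ {μ} := by
      intro x
      by_cases h0 : x = 0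
      · rw [h0, MulChar.map_zero]; exact zero_mem _
      · obtain ⟨k, hk⟩ := hval x h0
        rw [hk]; exact pow_mem_adj _ _
    exact sum_mem fun x _ => mul_mem (sub_mem (hv _) (one_mem _)) (sub_mem (hv _) (one_mem _))
  obtain ⟨s, hs⟩ := hN
  have hT3 : DvdPow μ 3 (∑ x : F, f x) := by
    have h1 := hND.mul' (DvdPow.of_mem hTmem)
    have h2 := h2T.mul' (DvdPow.of_mem (natCast_mem (Algebra.adjoin ℤ {μ}) s))
    have := h1.sub' h2
    convert this using 1
    rw [hs]; push_cast; ring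
  have := hT3.sub' hNm
  rw [hT] at this
  convert this using 1; ring

/-- Relation between `J(ψ,η)` and `J(ψ,ψ)`. -/
lemma jac_quad {F : Type*} [Field F] [Fintype F] [DecidableEq F] (hF : ringChar F ≠ 2)
    (ψ : MulChar F ℂ) (hψ : ψ ≠ 1) :
    ∑ u : F, ψ (1 - u) * ((quadraticChar F u : ℤ) : ℂ) = ψ 4 * ∑ x : F, ψ x * ψ (1 - x) := by
  have h2 : (2 : F) ≠ 0 := Ring.two_ne_zero hF
  have hs1 : ∑ x : F, ψ x = 0 := MulChar.sum_eq_zero_of_ne_one hψ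
  have hs1' : ∑ x : F, ψ (1 - x) = 0 := by
    rw [← hs1]; exact (Equiv.subLeft (1 : F)).sum_comp (fun x => ψ x)
  have e1 : ∑ u : F, ψ (1 - u) * ((quadraticChar F u : ℤ) : ℂ) =
      ∑ u : F, ψ (1 - u) * ((quadraticChar F u + 1 : ℤ) : ℂ) := by
    push_cast
    simp only [mul_add, Finset.sum_add_distrib, mul_one, hs1', add_zero]
  have e2 : ∑ t : F, ψ (1 - t ^ 2) =
      ∑ u : F, ψ (1 - u) * ((quadraticChar F u + 1 : ℤ) : ℂ) := by
    rw [← Finset.sum_fiberwise (s := Finset.univ) (g := fun t : F => t ^ 2)]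
    refine Finset.sum_congr rfl fun u _ => ?_
    rw [Finset.sum_congr rfl (g := fun _ => ψ (1 - u))
      (fun t ht => by rw [(Finset.mem_filter.mp ht).2]), Finset.sum_const,
      ← quadraticChar_card_sqrts hF u, nsmul_eq_mul, mul_comm]
    congr 1
    rw [Int.cast_natCast]
    congr 2
    ext t; simp
  have e3 : ∑ t : F, ψ (1 - t ^ 2) = ∑ x : F, ψ (1 - (2 * x - 1) ^ 2) :=
    (((Equiv.mulLeft₀ (2 : F) h2).trans (Equiv.subRight (1 : F))).sum_comp
      (fun t => ψ (1 - t ^ 2))).symm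
  rw [e1, ← e2, e3, Finset.mul_sum]
  refine Finset.sum_congr rfl fun x _ => ?_
  rw [← map_mul, ← map_mul]
  congr 1; ring

theorem jacobiSum_one_lsq_congruence {F : Type*} [Field F] [Fintype F] [DecidableEq F]
    (l p r q : ℕ) (hl : l.Prime) (hl3 : 3 ≤ l) (hp : p.Prime) (hr : 0 < r)
    (hq : q = p ^ r) (hql : q % (2 * l ^ 2) = 1) (hcard : Fintype.card F = q)
    (γ : F) (hγ : ∀ x : F, x ≠ 0 → ∃ k : ℕ, γ ^ k = x)
    (ζ : ℂ) (hζ : ζ = Complex.exp (2 * Real.pi * Complex.I / ((2 * l ^ 2 : ℕ) : ℂ)))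
    (ζl : ℂ) (hζl : ζl = ζ ^ 2)
    (χ : F → ℂ) (hχ0 : χ 0 = 0) (hχγ : χ γ = ζ)
    (hχmul : ∀ x y : F, χ (x * y) = χ x * χ y)
    (w : ℤ) (hw : γ ^ w = 2) :
    ∃ c : ℕ → ℤ,
      IsIntegral ℤ ((jSum χ 1 ((l : ℤ) ^ 2) -
          ζl ^ (-w) * (-1 + ∑ i ∈ Finset.Icc 3 l, (c i : ℂ) * (ζl - 1) ^ i)) /
        (1 - ζl) ^ (l + 1)) := by
  classical
  have hl0 : 0 < l ^ 2 := by positivity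
  have hl9 : 9 ≤ l ^ 2 := by nlinarith
  have hlodd : Odd (l ^ 2) := (hl.odd_of_ne_two (by omega)).pow
  obtain ⟨h, hh⟩ := hlodd
  have hprim : IsPrimitiveRoot ζ (2 * l ^ 2) := by
    rw [hζ]; exact Complex.isPrimitiveRoot_exp _ (by omega)
  have hpriml : IsPrimitiveRoot ζl (l ^ 2) := by
    rw [hζl]; exact hprim.pow (by omega) rfl
  have hζ0 : ζ ≠ 0 := hprim.ne_zero (by omega)
  have hζl0 : ζl ≠ 0 := hpriml.ne_zero (by omega)
  have hζl2 : ζ ^ (l ^ 2) = -1 := by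
    have h1 : (ζ ^ (l ^ 2)) ^ 2 = 1 := by rw [← pow_mul, mul_comm]; exact hprim.pow_eq_one
    rcases sq_eq_one_iff.mp h1 with h1 | h1
    · exact absurd (Nat.le_of_dvd hl0 (hprim.dvd_of_pow_eq_one _ h1)) (by omega)
    · exact h1
  have hγ0 : γ ≠ 0 := by rintro rfl; rw [hχ0] at hχγ; exact hζ0 hχγ.symm
  have hχ1 : χ 1 = 1 := by
    have := hχmul γ 1
    rw [mul_one, hχγ] at this
    exact (mul_left_cancel₀ hζ0 (by rw [mul_one]; exact this)).symm
  let f : F →*₀ ℂ := ⟨⟨χ, hχ0⟩, hχ1, hχmul⟩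
  let X : MulChar F ℂ := ⟨f.toMonoidHom, fun a ha => by
    rw [isUnit_iff_ne_zero, not_not] at ha; rw [ha]; exact hχ0⟩
  have hX : ∀ x, X x = χ x := fun x => rfl
  have hfx : ∀ x, f x = χ x := fun x => rfl
  have hχpow : ∀ k : ℕ, χ (γ ^ k) = ζ ^ k := fun k => by
    rw [← hfx, map_pow, hfx, hχγ]
  set ψ : MulChar F ℂ := X ^ (l ^ 2 - 1) with hψdef
  have hψ : ∀ x, ψ x = χ x ^ (l ^ 2 - 1) := fun x => by
    rw [hψdef, MulChar.pow_apply' _ (by omega), hX]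
  have h2h : l ^ 2 - 1 = 2 * h := by omega
  have hψγ : ∀ k : ℕ, ψ (γ ^ k) = ζl ^ (h * k) := fun k => by
    rw [hψ, hχpow, hζl, h2h, ← pow_mul, ← pow_mul]; congr 1; ring
  have hval : ∀ x : F, x ≠ 0 → ∃ k : ℕ, ψ x = ζl ^ k := by
    intro x hx
    obtain ⟨k, rfl⟩ := hγ x hx
    exact ⟨_, hψγ k⟩
  have hψne : ψ ≠ 1 := by
    intro hc
    have h1 := hψγ 1
    rw [hc, pow_one, MulChar.one_apply (isUnit_iff_ne_zero.mpr hγ0)] at h1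
    have := Nat.le_of_dvd (by omega) (hpriml.dvd_of_pow_eq_one _ h1.symm)
    omega
  have hψ2ne : ψ ^ 2 ≠ 1 := by
    intro hc
    have h1 := hψγ 1
    have h3 : (ψ ^ 2) γ = ψ γ ^ 2 := MulChar.pow_apply' _ two_ne_zero _
    rw [hc, MulChar.one_apply (isUnit_iff_ne_zero.mpr hγ0)] at h3
    rw [pow_one] at h1
    rw [h1, ← pow_mul] at h3
    have := Nat.le_of_dvd (by omega) (hpriml.dvd_of_pow_eq_one _ h3.symm)
    omega
  have hneg : ψ (-1) = 1 := by
    rw [hψ, h2h, pow_mul]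
    have : χ (-1) ^ 2 = 1 := by rw [sq, ← hχmul]; simpa using hχ1
    rw [this, one_pow]
  have hcardm : Fintype.card F = l ^ 2 * (2 * (q / (2 * l ^ 2))) + 1 := by
    rw [hcard]
    have := Nat.div_add_mod q (2 * l ^ 2)
    rw [hql] at this
    rw [← mul_assoc, mul_comm (l ^ 2) 2]; exact this.symm
  have hF : ringChar F ≠ 2 := by
    intro hc
    have := FiniteField.even_card_of_char_two hc
    rw [hcardm] at this
    have h4 : (l ^ 2 * (2 * (q / (2 * l ^ 2))) + 1) % 2 = 1 := by
      rw [mul_left_comm]; omega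
    omega
  have hcong := jac_cong ζl (l ^ 2) (2 * (q / (2 * l ^ 2))) ⟨h, hh⟩ hpriml (by omega) hcardm ψ
    hψne hψ2ne hneg hval
  -- the quadratic character
  have hqγ : quadraticChar F γ = -1 := by
    rcases quadraticChar_dichotomy hγ0 with h1 | h1
    · exfalso
      obtain ⟨a, ha⟩ := quadraticChar_exists_neg_one hF
      have ha0 : a ≠ 0 := by rintro rfl; simp at ha
      obtain ⟨k, rfl⟩ := hγ a ha0
      rw [map_pow, h1, one_pow] at ha
      norm_num at ha
    · exact h1
  have hquad : ∀ x : F, χ x ^ (l ^ 2) = ((quadraticChar F x : ℤ) : ℂ) := by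
    intro x
    by_cases hx : x = 0
    · rw [hx, hχ0, zero_pow (by omega)]; simp
    · obtain ⟨k, rfl⟩ := hγ x hx
      rw [hχpow, map_pow, hqγ, ← pow_mul, mul_comm, pow_mul, hζl2]; simp
  have hx2 : ∀ x : F, x ≠ 0 → χ x ^ (2 * l ^ 2) = 1 := by
    intro x hx
    obtain ⟨k, rfl⟩ := hγ x hx
    rw [hχpow, ← pow_mul, mul_comm, pow_mul, hprim.pow_eq_one, one_pow]
  have hJ1 : jSum χ 1 ((l : ℤ) ^ 2) = ∑ v : F, χ v * χ (v + 1) ^ (l ^ 2) := by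
    unfold jSum
    refine Finset.sum_congr rfl fun v _ => ?_
    have a1 : charPow χ 1 v = χ v := by
      unfold charPow; split_ifs with hv
      · rw [hv, hχ0]
      · rw [zpow_one]
    have a2 : ∀ u, charPow χ ((l : ℤ) ^ 2) u = χ u ^ (l ^ 2) := by
      intro u
      unfold charPow; split_ifs with hv
      · rw [hv, hχ0, zero_pow (by omega)]
      · rw [← zpow_natCast]; push_cast; rfl
    rw [a1, a2]
  have hJ2 : ∑ v : F, χ v * χ (v + 1) ^ (l ^ 2) = ∑ v : F, ψ v * χ (v + 1) ^ (l ^ 2) := by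
    rw [← Equiv.sum_comp (Equiv.inv F)]
    refine Finset.sum_congr rfl fun v _ => ?_
    rw [Equiv.inv_apply]
    by_cases hv : v = 0
    · rw [hv, MulChar.map_zero, inv_zero, hχ0]
    have e : v⁻¹ + 1 = v⁻¹ * (v + 1) := by field_simp; ring
    have hvi : χ v * χ v⁻¹ = 1 := by rw [← hχmul, mul_inv_cancel₀ hv, hχ1]
    rw [e, hχmul, mul_pow, ← mul_assoc]
    congr 1
    rw [hψ]
    have hv2 := hx2 v hv
    have e3 : χ v ^ (2 * l ^ 2) = χ v ^ (l ^ 2 - 1) * χ v ^ (l ^ 2 + 1) := by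
      rw [← pow_add]; congr 1; omega
    calc χ v⁻¹ * χ v⁻¹ ^ l ^ 2 = χ v⁻¹ ^ (l ^ 2 + 1) * χ v ^ (2 * l ^ 2) := by rw [hv2]; ring
      _ = χ v ^ (l ^ 2 - 1) * (χ v * χ v⁻¹) ^ (l ^ 2 + 1) := by rw [e3, mul_pow]; ring
      _ = _ := by rw [hvi]; ring
  have hJ3 : ∑ v : F, ψ v * χ (v + 1) ^ (l ^ 2) =
      ∑ u : F, ψ (1 - u) * ((quadraticChar F u : ℤ) : ℂ) := by
    rw [← Equiv.sum_comp (Equiv.subRight (1 : F))]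
    refine Finset.sum_congr rfl fun u _ => ?_
    have e : u - 1 = (-1) * (1 - u) := by ring
    rw [Equiv.subRight_apply, sub_add_cancel, hquad, e, map_mul, hneg, one_mul]
  have hψ4 : ψ 4 = ζl ^ (-w) := by
    have e : (4 : F) = γ ^ w * γ ^ w := by rw [hw]; norm_num
    have e1 : χ (γ ^ w) = ζ ^ w := by rw [← hfx, map_zpow₀, hfx, hχγ]
    have e2 : ζ ^ w * ζ ^ w = ζl ^ w := by rw [hζl, ← mul_zpow, sq]
    have e4 : (ζl ^ w) ^ (l ^ 2) = 1 := by
      rw [← zpow_natCast, zpow_comm, zpow_natCast, hpriml.pow_eq_one, one_zpow]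
    rw [hψ, e, hχmul, e1, e2, zpow_neg]
    refine eq_inv_of_mul_eq_one_left ?_
    rw [← pow_succ, Nat.sub_add_cancel hl0, e4]
  have hJ : jSum χ 1 ((l : ℤ) ^ 2) = ζl ^ (-w) * ∑ x : F, ψ x * ψ (1 - x) := by
    rw [hJ1, hJ2, hJ3, jac_quad hF ψ hψne, hψ4]
  obtain ⟨y, hy, hye⟩ := hcong
  obtain ⟨c, z, hz, hyc⟩ := adj_expand hy (l - 2)
  refine ⟨fun i => c (i - 3), ?_⟩
  have hsum : ∑ i ∈ Finset.Icc 3 l, ((c (i - 3) : ℤ) : ℂ) * (ζl - 1) ^ i =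
      (∑ i ∈ Finset.range (l - 2), (c i : ℂ) * (ζl - 1) ^ i) * (ζl - 1) ^ 3 := by
    rw [← Finset.Ico_add_one_right_eq_Icc, Finset.sum_Ico_eq_sum_range, Finset.sum_mul]
    have : l + 1 - 3 = l - 2 := by omega
    rw [this]
    refine Finset.sum_congr rfl fun i _ => ?_
    rw [Nat.add_sub_cancel_left, pow_add]; ring
  have hK : ∑ x : F, ψ x * ψ (1 - x) = -1 + y * (ζl - 1) ^ 3 := by
    rw [← hye]; ring
  have hne : (1 - ζl) ≠ 0 := sub_ne_zero.mpr (hpriml.ne_one (by omega)).symm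
  have hfinal : (jSum χ 1 ((l : ℤ) ^ 2) -
          ζl ^ (-w) * (-1 + ∑ i ∈ Finset.Icc 3 l, ((c (i - 3) : ℤ) : ℂ) * (ζl - 1) ^ i)) /
        (1 - ζl) ^ (l + 1) = ζl ^ (-w) * ((-1) ^ (l + 1) * z) := by
    rw [div_eq_iff (pow_ne_zero _ hne), hJ, hK, hsum]
    nth_rewrite 1 [hyc]
    have e5 : (ζl - 1) ^ (l - 2) * (ζl - 1) ^ 3 = (-1) ^ (l + 1) * (1 - ζl) ^ (l + 1) := by
      rw [← pow_add, ← mul_pow]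
      have : l - 2 + 3 = l + 1 := by omega
      rw [this]; congr 1; ring
    linear_combination (ζl ^ (-w) * z) * e5
  rw [hfinal]
  have hint : IsIntegral ℤ ζl := hpriml.isIntegral hl0
  have hzint : IsIntegral ℤ z := adjoin_le_integralClosure hint hz
  have hwint : IsIntegral ℤ (ζl ^ (-w)) := by
    refine IsIntegral.of_pow hl0 ?_
    rw [← zpow_natCast, zpow_comm, zpow_natCast, hpriml.pow_eq_one, one_zpow]
    exact isIntegral_one
  exact hwint.mul (((isIntegral_one.neg).pow _).mul hzint)
end
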